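/- Let q be a braiding matrix with connected Dynkin diagram such that B_q is finite dimensional, and let B be a pre-Nichols algebra of q with finite GKdim. Let i,j,k ∈ I_θ be such that q_{ii} = q_{kk} = −1, q̃_{ik} = 1, q̃_{ij} ∈ G_3' and q_{jj} = −q̃_{jk} = ±q̃_{ij}. Then [x_i, x_{jjk}]_c = (1 + q_{jj}²) q_{kj}^{−1} [x_{ijk}, x_j]_c + (1 + q_{jj}²)(1 + q_{jj}) q_{ij} x_j x_{ijk} in B. -/

import Mathlib

/-
Common framework for formalizing statements from
"Finite GK-dimensional pre-Nichols algebras of (super)modular and unidentified type"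
(Angiono, Campagnolo, Sanmarco).

We work over `ℂ` (an algebraically closed field of characteristic zero).
A braiding matrix is `q : Fin θ → Fin θ → ℂˣ`.  The tensor algebra `T(V)` of the
associated braided vector space of diagonal type is realized as the free algebra
on `Fin θ`.  The braided bialgebra structure on `T(V)` (the braided coproduct,
uniquely determined by the braiding matrix) is packaged in the structure
`BraidedStr`: its fields characterize it uniquely, so quantifying over
`S : BraidedStr θ q` is equivalent to using "the" braided coproduct.

A pre-Nichols algebra of `q` is the quotient `T(V)/I` by an ℕ₀-homogeneous
(two-sided) braided bi-ideal `I` generated in degrees ≥ 2 (`IsPreNicholsIdeal`);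
such an ideal is automatically contained in the defining ideal `Jq` of the
Nichols algebra, which is the largest such ideal.  A statement
"`x = 0` holds in the pre-Nichols algebra `T(V)/I`" is formalized as `x ∈ I`.
-/

open scoped TensorProduct

noncomputable section

namespace PreNicholsPaper

/-- The tensor algebra `T(V)` of the braided vector space of diagonal type of rank `θ`. -/
abbrev TV (θ : ℕ) := FreeAlgebra ℂ (Fin θ)

/-- The generator `x_i` of `T(V)`. -/
def gen (θ : ℕ) (i : Fin θ) : TV θ := FreeAlgebra.ι ℂ i

/-- The monomial `x_{i_1} ⋯ x_{i_n}` associated to a word. -/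
def wordElem (θ : ℕ) (w : List (Fin θ)) : TV θ := (w.map (gen θ)).prod

/-- The multidegree in `ℕ₀^θ` of a word. -/
def degW (θ : ℕ) (w : List (Fin θ)) : Fin θ → ℕ := fun i => w.count i

/-- `α_i`, the `i`-th canonical basis vector of `ℕ₀^θ`. -/
def δ (θ : ℕ) (i : Fin θ) : Fin θ → ℕ := fun k => if k = i then 1 else 0

/-- The bilinear form `ℕ₀^θ × ℕ₀^θ → ℂˣ` attached to the braiding matrix,
`q(α_i, α_j) = q_{ij}`, evaluated in `ℂ`. -/
def qf {θ : ℕ} (q : Fin θ → Fin θ → ℂˣ) (a b : Fin θ → ℕ) : ℂ :=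
  ∏ i : Fin θ, ∏ j : Fin θ, (q i j : ℂ) ^ (a i * b j)

/-- `q̃_{ij} = q_{ij} q_{ji}`. -/
def qtil {θ : ℕ} (q : Fin θ → Fin θ → ℂˣ) (i j : Fin θ) : ℂ := (q i j : ℂ) * (q j i : ℂ)

/-- The braided commutator `[u,v]_c = uv - q(a,b) vu` of elements `u, v`
which are homogeneous of multidegrees `a`, `b` respectively. -/
def brk {θ : ℕ} (q : Fin θ → Fin θ → ℂˣ) (a b : Fin θ → ℕ) (u v : TV θ) : TV θ :=
  u * v - qf q a b • (v * u)

/-- `(ad_c x_i) y = x_i y - q(α_i, b) y x_i` for `y` homogeneous of multidegree `b`. -/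
def ad1 {θ : ℕ} (q : Fin θ → Fin θ → ℂˣ) (i : Fin θ) (b : Fin θ → ℕ) (y : TV θ) : TV θ :=
  brk q (δ θ i) b (gen θ i) y

/-- The iterated braided adjoint `x_{i_1 i_2 ⋯ i_k} = (ad_c x_{i_1}) x_{i_2 ⋯ i_k}`. -/
def xw {θ : ℕ} (q : Fin θ → Fin θ → ℂˣ) : List (Fin θ) → TV θ
  | [] => 1
  | [i] => gen θ i
  | i :: w => ad1 q i (degW θ w) (xw q w)

/-- `(ad_c x_i)^m x_j`. -/
def adpow {θ : ℕ} (q : Fin θ → Fin θ → ℂˣ) (i j : Fin θ) : ℕ → TV θ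
  | 0 => gen θ j
  | m + 1 => ad1 q i (fun k => m * δ θ i k + δ θ j k) (adpow q i j m)

/-- The homogeneous component of total degree `n` of `T(V)`. -/
def homogTot (θ : ℕ) (n : ℕ) : Submodule ℂ (TV θ) :=
  Submodule.span ℂ {x | ∃ w : List (Fin θ), w.length = n ∧ x = wordElem θ w}

/-- The homogeneous component of multidegree `d ∈ ℕ₀^θ` of `T(V)`. -/
def homogD (θ : ℕ) (d : Fin θ → ℕ) : Submodule ℂ (TV θ) :=
  Submodule.span ℂ {x | ∃ w : List (Fin θ), degW θ w = d ∧ x = wordElem θ w}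

/-- The braided bialgebra structure on `T(V)` determined by the braiding matrix `q`:
the braided coproduct `Δ` together with the multiplication `mulB` of the braided
tensor product `T(V) ⊗ T(V)`.  These axioms determine `Δ` and `mulB` uniquely. -/
structure BraidedStr (θ : ℕ) (q : Fin θ → Fin θ → ℂˣ) where
  Δ : TV θ →ₗ[ℂ] TensorProduct ℂ (TV θ) (TV θ)
  mulB : TensorProduct ℂ (TV θ) (TV θ) →ₗ[ℂ]
    TensorProduct ℂ (TV θ) (TV θ) →ₗ[ℂ] TensorProduct ℂ (TV θ) (TV θ)
  mulB_spec : ∀ (a d : TV θ) (wb wc : List (Fin θ)),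
    mulB (a ⊗ₜ[ℂ] wordElem θ wb) (wordElem θ wc ⊗ₜ[ℂ] d)
      = qf q (degW θ wb) (degW θ wc) • ((a * wordElem θ wc) ⊗ₜ[ℂ] (wordElem θ wb * d))
  Δ_one : Δ 1 = 1 ⊗ₜ[ℂ] 1
  Δ_gen : ∀ i, Δ (gen θ i) = gen θ i ⊗ₜ[ℂ] 1 + 1 ⊗ₜ[ℂ] gen θ i
  Δ_mul : ∀ u v : TV θ, Δ (u * v) = mulB (Δ u) (Δ v)

variable {θ : ℕ} {q : Fin θ → Fin θ → ℂˣ}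

/-- `x` is a primitive element. -/
def IsPrimitiveIn (S : BraidedStr θ q) (x : TV θ) : Prop :=
  S.Δ x = x ⊗ₜ[ℂ] (1 : TV θ) + (1 : TV θ) ⊗ₜ[ℂ] x

/-- The submodule `I ⊗ T(V) + T(V) ⊗ J` of `T(V) ⊗ T(V)`. -/
def mixedPair (I J : Submodule ℂ (TV θ)) : Submodule ℂ (TensorProduct ℂ (TV θ) (TV θ)) :=
  Submodule.span ℂ
    ({x | ∃ a b : TV θ, a ∈ I ∧ x = a ⊗ₜ[ℂ] b} ∪ {x | ∃ a b : TV θ, b ∈ J ∧ x = a ⊗ₜ[ℂ] b})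

/-- The submodule `I ⊗ T(V) + T(V) ⊗ I` of `T(V) ⊗ T(V)`. -/
def mixedSub (I : Submodule ℂ (TV θ)) : Submodule ℂ (TensorProduct ℂ (TV θ) (TV θ)) :=
  mixedPair I I

/-- `I` is the defining ideal of a pre-Nichols algebra of `q`：an ℕ₀-homogeneous
two-sided (bi-)ideal of `T(V)` generated in degrees `≥ 2` which is also a coideal.
Such an ideal is automatically contained in the defining ideal `Jq` of the Nichols
algebra, and the pre-Nichols algebra is the quotient `T(V)/I`. -/
structure IsPreNicholsIdeal (S : BraidedStr θ q) (I : Submodule ℂ (TV θ)) : Prop where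
  mul_left : ∀ a x : TV θ, x ∈ I → a * x ∈ I
  mul_right : ∀ a x : TV θ, x ∈ I → x * a ∈ I
  homog_ge2 : I = Submodule.span ℂ {x | x ∈ I ∧ ∃ n, 2 ≤ n ∧ x ∈ homogTot θ n}
  coideal : ∀ x ∈ I, S.Δ x ∈ mixedSub I

/-- The defining ideal `J_q` of the Nichols algebra `B_q = T(V)/J_q`:
the maximal homogeneous braided Hopf ideal generated in degrees `≥ 2`. -/
def Jq (S : BraidedStr θ q) : Submodule ℂ (TV θ) := sSup {I | IsPreNicholsIdeal S I}

/-- The standard filtration of `T(V)`: span of words of length `≤ n`. -/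
def Wfil (θ : ℕ) (n : ℕ) : Submodule ℂ (TV θ) :=
  Submodule.span ℂ {x | ∃ w : List (Fin θ), w.length ≤ n ∧ x = wordElem θ w}

/-- The quotient algebra `T(V)/I` has finite Gelfand–Kirillov dimension, i.e.
the standard filtration of the (finitely generated) quotient has polynomial growth. -/
def FinGK (I : Submodule ℂ (TV θ)) : Prop :=
  ∃ C d : ℕ, ∀ n : ℕ, Module.finrank ℂ ((Wfil θ n).map I.mkQ) ≤ C * (n + 1) ^ d

/-- The Gelfand–Kirillov dimension of the quotient algebra `T(V)/I`. -/
def GKdim (I : Submodule ℂ (TV θ)) : ℝ :=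
  Filter.limsup
    (fun n : ℕ => Real.log (Module.finrank ℂ ((Wfil θ n).map I.mkQ)) / Real.log n)
    Filter.atTop

/-- `I` defines an eminent pre-Nichols algebra: it is a finite-GKdim pre-Nichols
algebra, and every finite-GKdim pre-Nichols algebra of `q` is a quotient of it. -/
def IsEminent (S : BraidedStr θ q) (I : Submodule ℂ (TV θ)) : Prop :=
  IsPreNicholsIdeal S I ∧ FinGK I ∧
    ∀ I' : Submodule ℂ (TV θ), IsPreNicholsIdeal S I' → FinGK I' → I ≤ I'

/-- The Dynkin diagram of the braiding matrix `q`: vertices `Fin θ`, an edge between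
`i ≠ j` iff `q̃_{ij} ≠ 1`. -/
def dynkin {θ : ℕ} (q : Fin θ → Fin θ → ℂˣ) : SimpleGraph (Fin θ) :=
  SimpleGraph.fromRel (fun i j => qtil q i j ≠ 1)

/-- The quantum number `(m)_t = 1 + t + ⋯ + t^{m-1}`. -/
def qnum (t : ℂ) (m : ℕ) : ℂ := ∑ k ∈ Finset.range m, t ^ k

/-- The set of `n ∈ ℕ₀` such that `(n+1)_{q_{ii}} (1 - q_{ii}^n q̃_{ij}) = 0`,
i.e. such that `(ad_c x_i)^{n+1} x_j = 0` in the Nichols algebra.  The entry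
`c_{ij}` of the generalized Cartan matrix is `-(min of this set)`. -/
def cSet {θ : ℕ} (q : Fin θ → Fin θ → ℂˣ) (i j : Fin θ) : Set ℕ :=
  {n | qnum (q i i : ℂ) (n + 1) * (1 - (q i i : ℂ) ^ n * qtil q i j) = 0}

/-- The generalized Cartan matrix of `q`. -/
def cij {θ : ℕ} (q : Fin θ → Fin θ → ℂˣ) (i j : Fin θ) : ℤ :=
  if i = j then 2 else -(Int.ofNat (sInf (cSet q i j)))

/-- All entries `c_{ij}` are defined at the vertex `i`. -/
def reflectable {θ : ℕ} (q : Fin θ → Fin θ → ℂˣ) (i : Fin θ) : Prop :=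
  ∀ j, j ≠ i → (cSet q i j).Nonempty

/-- The `i`-th reflection of the braiding matrix:
`(r_i q)_{jk} = q(s_i α_j, s_i α_k)` where `s_i α_j = α_j - c_{ij} α_i`. -/
def reflectMat {θ : ℕ} (q : Fin θ → Fin θ → ℂˣ) (i : Fin θ) : Fin θ → Fin θ → ℂˣ :=
  fun j k =>
    q j k * q j i ^ (-(cij q i k)) * q i k ^ (-(cij q i j)) * q i i ^ (cij q i j * cij q i k)

/-- The reflection `s_i` acting on `ℤ^θ`. -/
def sRefl {θ : ℕ} (q : Fin θ → Fin θ → ℂˣ) (i : Fin θ) (β : Fin θ → ℤ) : Fin θ → ℤ :=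
  fun k => β k - (if k = i then ∑ j, cij q i j * β j else 0)

/-- The (real) roots of `q`, together with the base points of the Weyl groupoid at
which they live: pairs `(q', β)` obtained from a simple root of `q` by iterated
reflections. -/
inductive ReachRoot {θ : ℕ} (q₀ : Fin θ → Fin θ → ℂˣ) :
    (Fin θ → Fin θ → ℂˣ) → (Fin θ → ℤ) → Prop
  | simple (j : Fin θ) : ReachRoot q₀ q₀ (fun k => if k = j then 1 else 0)
  | reflect {q' : Fin θ → Fin θ → ℂˣ} {β : Fin θ → ℤ} (i : Fin θ) :
      ReachRoot q₀ q' β → ReachRoot q₀ (reflectMat q' i) (sRefl q' i β)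

/-- `q` has a finite (generalized) root system: all reflections are defined at every
point of the Weyl groupoid, and the set of roots so obtained is finite. -/
def FiniteRootSystem {θ : ℕ} (q : Fin θ → Fin θ → ℂˣ) : Prop :=
  (∀ q' i, (∃ β, ReachRoot q q' β) → reflectable q' i) ∧
    Set.Finite {β : Fin θ → ℤ | ∃ q', ReachRoot q q' β}

/-- Conjecture (Andruskiewitsch–Angiono–Heckenberger): the root system of a Nichols
algebra of diagonal type with finite Gelfand–Kirillov dimension is finite. -/
def AAH : Prop :=
  ∀ (θ : ℕ) (q : Fin θ → Fin θ → ℂˣ) (S : BraidedStr θ q), FinGK (Jq S) → FiniteRootSystem q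

/-- The two-sided ideal of `T(V)` generated by a set. -/
def idealGen (θ : ℕ) (s : Set (TV θ)) : Submodule ℂ (TV θ) :=
  Submodule.span ℂ {x | ∃ g ∈ s, ∃ a b : TV θ, x = a * g * b}

end PreNicholsPaper

namespace PreNicholsPaper

open LinearMap (mulLeft mulRight)

section Words

variable {θ : ℕ}

@[simp]
theorem wordElem_nil : wordElem θ [] = 1 := rfl

@[simp]
theorem wordElem_cons (i : Fin θ) (w : List (Fin θ)) :
    wordElem θ (i :: w) = gen θ i * wordElem θ w := by
  simp [wordElem]

theorem wordElem_append (v w : List (Fin θ)) :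
    wordElem θ (v ++ w) = wordElem θ v * wordElem θ w := by
  simp [wordElem]

theorem wordElem_singleton (i : Fin θ) : wordElem θ [i] = gen θ i := by
  simp

/-- The basis of `T(V)` consisting of words. -/
def wordBasis (θ : ℕ) : Module.Basis (List (Fin θ)) ℂ (TV θ) :=
  (FreeAlgebra.basisFreeMonoid ℂ (Fin θ)).reindex FreeMonoid.toList

@[simp]
theorem wordBasis_apply (w : List (Fin θ)) : wordBasis θ w = wordElem θ w := by
  simp only [wordBasis, FreeAlgebra.basisFreeMonoid, Module.Basis.reindex_apply,
    Module.Basis.map_apply, wordElem]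
  simp [FreeAlgebra.equivMonoidAlgebraFreeMonoid, FreeMonoid.lift_apply]
  rfl

theorem word_hom_ext {M : Type*} [AddCommMonoid M] [Module ℂ M] {f g : TV θ →ₗ[ℂ] M}
    (h : ∀ w, f (wordElem θ w) = g (wordElem θ w)) : f = g :=
  (wordBasis θ).ext fun w => by simpa using h w

theorem span_words : Submodule.span ℂ (Set.range (wordElem θ)) = ⊤ := by
  rw [← (wordBasis θ).span_eq]
  congr 1
  ext x
  simp

/-- To show that all elements lie in a submodule, check it on words. -/
theorem mem_of_words {p : Submodule ℂ (TV θ)} (h : ∀ w, wordElem θ w ∈ p) (x : TV θ) : x ∈ p := by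
  have hle : (⊤ : Submodule ℂ (TV θ)) ≤ p := by
    rw [← span_words, Submodule.span_le]
    rintro _ ⟨w, rfl⟩
    exact h w
  exact hle trivial

theorem tensor_hom_ext {M : Type*} [AddCommMonoid M] [Module ℂ M]
    {f g : TV θ ⊗[ℂ] TV θ →ₗ[ℂ] M}
    (h : ∀ v w, f (wordElem θ v ⊗ₜ wordElem θ w) = g (wordElem θ v ⊗ₜ wordElem θ w)) : f = g := by
  refine TensorProduct.ext (word_hom_ext fun v => word_hom_ext fun w => ?_)
  simpa using h v w

@[simp]
theorem degW_nil : degW θ [] = 0 := by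
  ext; simp [degW]

@[simp]
theorem degW_cons (i : Fin θ) (w : List (Fin θ)) : degW θ (i :: w) = δ θ i + degW θ w := by
  ext j
  simp only [degW, δ, List.count_cons, Pi.add_apply, beq_iff_eq, eq_comm (a := i)]
  ring

end Words

section BilinearForm

variable {θ : ℕ} (q : Fin θ → Fin θ → ℂˣ)

theorem qf_add_left (a b c : Fin θ → ℕ) : qf q (a + b) c = qf q a c * qf q b c := by
  simp [qf, add_mul, pow_add, Finset.prod_mul_distrib]

theorem qf_add_right (a b c : Fin θ → ℕ) : qf q a (b + c) = qf q a b * qf q a c := by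
  simp [qf, mul_add, pow_add, Finset.prod_mul_distrib]

@[simp]
theorem qf_zero_left (a : Fin θ → ℕ) : qf q 0 a = 1 := by
  simp [qf]

@[simp]
theorem qf_zero_right (a : Fin θ → ℕ) : qf q a 0 = 1 := by
  simp [qf]

@[simp]
theorem qf_δ (i j : Fin θ) : qf q (δ θ i) (δ θ j) = q i j := by
  unfold qf δ
  rw [Finset.prod_eq_single i, Finset.prod_eq_single j] <;> simp +contextual

/-- The algebra automorphism acting on elements of degree `b` by `q(a, b)`. -/
def twL (a : Fin θ → ℕ) : TV θ →ₐ[ℂ] TV θ :=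
  FreeAlgebra.lift ℂ fun j => qf q a (δ θ j) • gen θ j

/-- The algebra automorphism acting on elements of degree `b` by `q(b, a)`. -/
def twR (a : Fin θ → ℕ) : TV θ →ₐ[ℂ] TV θ :=
  FreeAlgebra.lift ℂ fun j => qf q (δ θ j) a • gen θ j

@[simp]
theorem twL_gen (a : Fin θ → ℕ) (j : Fin θ) : twL q a (gen θ j) = qf q a (δ θ j) • gen θ j := by
  simp [twL, gen]

@[simp]
theorem twR_gen (a : Fin θ → ℕ) (j : Fin θ) : twR q a (gen θ j) = qf q (δ θ j) a • gen θ j := by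
  simp [twR, gen]

theorem twL_word (a : Fin θ → ℕ) (w : List (Fin θ)) :
    twL q a (wordElem θ w) = qf q a (degW θ w) • wordElem θ w := by
  induction w with
  | nil => simp
  | cons i w ih => simp [ih, qf_add_right, smul_smul, mul_comm]

theorem twR_word (a : Fin θ → ℕ) (w : List (Fin θ)) :
    twR q a (wordElem θ w) = qf q (degW θ w) a • wordElem θ w := by
  induction w with
  | nil => simp
  | cons i w ih => simp [ih, qf_add_left, smul_smul, mul_comm]

theorem twL_add (a b : Fin θ → ℕ) (x : TV θ) : twL q (a + b) x = twL q a (twL q b x) := by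
  have : (twL q (a + b)).toLinearMap = (twL q a).toLinearMap ∘ₗ (twL q b).toLinearMap :=
    word_hom_ext fun w => by simp [twL_word, qf_add_left, smul_smul, mul_comm]
  exact LinearMap.congr_fun this x

theorem twR_add (a b : Fin θ → ℕ) (x : TV θ) : twR q (a + b) x = twR q a (twR q b x) := by
  have : (twR q (a + b)).toLinearMap = (twR q a).toLinearMap ∘ₗ (twR q b).toLinearMap :=
    word_hom_ext fun w => by simp [twR_word, qf_add_right, smul_smul, mul_comm]
  exact LinearMap.congr_fun this x

@[simp]
theorem twL_zero (x : TV θ) : twL q 0 x = x := by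
  have : (twL q 0).toLinearMap = LinearMap.id := word_hom_ext fun w => by simp [twL_word]
  exact LinearMap.congr_fun this x

@[simp]
theorem twR_zero (x : TV θ) : twR q 0 x = x := by
  have : (twR q 0).toLinearMap = LinearMap.id := word_hom_ext fun w => by simp [twR_word]
  exact LinearMap.congr_fun this x

end BilinearForm

section Existence

variable {θ : ℕ} (q : Fin θ → Fin θ → ℂˣ)

/-- The braiding of `T(V)`, as a bilinear map. -/
def braidMap : TV θ ⊗[ℂ] TV θ →ₗ[ℂ] TV θ ⊗[ℂ] TV θ :=
  TensorProduct.lift ((wordBasis θ).constr ℂ fun w =>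
    (TensorProduct.mk ℂ (TV θ) (TV θ)).flip (wordElem θ w) ∘ₗ (twL q (degW θ w)).toLinearMap)

theorem braidMap_word (w : List (Fin θ)) (c : TV θ) :
    braidMap q (wordElem θ w ⊗ₜ c) = twL q (degW θ w) c ⊗ₜ wordElem θ w := by
  rw [braidMap, TensorProduct.lift.tmul, ← wordBasis_apply w, Module.Basis.constr_basis]
  simp

/-- The multiplication of the braided tensor product `T(V) ⊗ T(V)`. -/
def braidedMul : TV θ ⊗[ℂ] TV θ →ₗ[ℂ] TV θ ⊗[ℂ] TV θ →ₗ[ℂ] TV θ ⊗[ℂ] TV θ :=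
  TensorProduct.curry
    (TensorProduct.map (LinearMap.mul' ℂ (TV θ)) (LinearMap.mul' ℂ (TV θ)) ∘ₗ
      (TensorProduct.assoc ℂ (TV θ) (TV θ) (TV θ ⊗[ℂ] TV θ)).symm.toLinearMap ∘ₗ
      TensorProduct.map LinearMap.id
        ((TensorProduct.assoc ℂ (TV θ) (TV θ) (TV θ)).toLinearMap ∘ₗ
          TensorProduct.map (braidMap q) LinearMap.id ∘ₗ
          (TensorProduct.assoc ℂ (TV θ) (TV θ) (TV θ)).symm.toLinearMap) ∘ₗ
      (TensorProduct.assoc ℂ (TV θ) (TV θ) (TV θ ⊗[ℂ] TV θ)).toLinearMap)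

theorem braidedMul_word (w : List (Fin θ)) (a c d : TV θ) :
    braidedMul q (a ⊗ₜ wordElem θ w) (c ⊗ₜ d) =
      (a * twL q (degW θ w) c) ⊗ₜ (wordElem θ w * d) := by
  simp [braidedMul, braidMap_word]

/-- The action of `x_i` on `T(V) ⊗ T(V)` by left multiplication by `Δ(x_i)`. -/
def opE (i : Fin θ) : TV θ ⊗[ℂ] TV θ →ₗ[ℂ] TV θ ⊗[ℂ] TV θ :=
  TensorProduct.map (mulLeft ℂ (gen θ i)) LinearMap.id +
    TensorProduct.map (twL q (δ θ i)).toLinearMap (mulLeft ℂ (gen θ i))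

@[simp]
theorem opE_tmul (i : Fin θ) (a b : TV θ) :
    opE q i (a ⊗ₜ b) = (gen θ i * a) ⊗ₜ b + twL q (δ θ i) a ⊗ₜ (gen θ i * b) := by
  simp [opE]

/-- The action of `T(V)` on `T(V) ⊗ T(V)` through the coproduct. -/
def coprodAct : TV θ →ₐ[ℂ] Module.End ℂ (TV θ ⊗[ℂ] TV θ) :=
  FreeAlgebra.lift ℂ (opE q)

theorem coprodAct_gen (i : Fin θ) : coprodAct q (gen θ i) = opE q i := by
  simp [coprodAct, gen]

theorem opE_braidedMul (i : Fin θ) (X Y : TV θ ⊗[ℂ] TV θ) :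
    opE q i (braidedMul q X Y) = braidedMul q (opE q i X) Y := by
  have : (braidedMul q).compr₂ (opE q i) = braidedMul q ∘ₗ opE q i := by
    refine tensor_hom_ext fun v w => TensorProduct.ext' fun c d => ?_
    simp only [LinearMap.compr₂_apply, LinearMap.comp_apply, braidedMul_word, opE_tmul, map_add,
      LinearMap.add_apply, map_mul, ← wordElem_cons, degW_cons, twL_add]
    simp [mul_assoc]
  exact LinearMap.congr_fun₂ this X Y

theorem coprodAct_apply (u : TV θ) (Y : TV θ ⊗[ℂ] TV θ) :
    coprodAct q u Y = braidedMul q (coprodAct q u (1 ⊗ₜ 1)) Y := by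
  have : (coprodAct q).toLinearMap =
      braidedMul q ∘ₗ (LinearMap.applyₗ (1 ⊗ₜ[ℂ] 1) ∘ₗ (coprodAct q).toLinearMap) := by
    refine word_hom_ext fun w => ?_
    induction w with
    | nil =>
      refine TensorProduct.ext' fun a b => ?_
      have := braidedMul_word q [] 1 a b
      simpa using this.symm
    | cons i w ih =>
      refine LinearMap.ext fun Z => ?_
      have h := LinearMap.congr_fun ih Z
      simp only [AlgHom.toLinearMap_apply, LinearMap.comp_apply, LinearMap.applyₗ_apply_apply] at h
      simp [coprodAct_gen, h, opE_braidedMul]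
  exact LinearMap.congr_fun (LinearMap.congr_fun this u) Y

/-- The braided bialgebra structure of `T(V)`. -/
def braidedStr : BraidedStr θ q where
  Δ := LinearMap.applyₗ (1 ⊗ₜ[ℂ] 1) ∘ₗ (coprodAct q).toLinearMap
  mulB := braidedMul q
  mulB_spec a d wb wc := by simp [braidedMul_word, twL_word, TensorProduct.smul_tmul']
  Δ_one := by simp
  Δ_gen i := by simp [coprodAct_gen]
  Δ_mul u v := by
    simp only [LinearMap.comp_apply, AlgHom.toLinearMap_apply, LinearMap.applyₗ_apply_apply,
      map_mul, Module.End.mul_apply]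
    exact coprodAct_apply q u _

end Existence

end PreNicholsPaper

namespace PreNicholsPaper

open LinearMap (mulLeft mulRight)

section Contraction

variable {θ : ℕ}

/-- Contraction of the second tensor factor with a linear functional. -/
def conR (η : TV θ →ₗ[ℂ] ℂ) : TV θ ⊗[ℂ] TV θ →ₗ[ℂ] TV θ :=
  (TensorProduct.rid ℂ (TV θ)).toLinearMap ∘ₗ TensorProduct.map LinearMap.id η

/-- Contraction of the first tensor factor with a linear functional. -/
def conL (η : TV θ →ₗ[ℂ] ℂ) : TV θ ⊗[ℂ] TV θ →ₗ[ℂ] TV θ :=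
  (TensorProduct.lid ℂ (TV θ)).toLinearMap ∘ₗ TensorProduct.map η LinearMap.id

@[simp]
theorem conR_tmul (η : TV θ →ₗ[ℂ] ℂ) (a b : TV θ) : conR η (a ⊗ₜ b) = η b • a := by
  simp [conR]

@[simp]
theorem conL_tmul (η : TV θ →ₗ[ℂ] ℂ) (a b : TV θ) : conL η (a ⊗ₜ b) = η a • b := by
  simp [conL]

/-- The coefficient of a word. -/
def coef (w : List (Fin θ)) : TV θ →ₗ[ℂ] ℂ := (wordBasis θ).coord w

theorem coef_word (v w : List (Fin θ)) : coef v (wordElem θ w) = if w = v then 1 else 0 := by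
  rw [coef, Module.Basis.coord_apply, ← wordBasis_apply, Module.Basis.repr_self,
    Finsupp.single_apply]

@[simp]
theorem coef_nil_one : coef (θ := θ) [] 1 = 1 := by
  simpa using coef_word (θ := θ) [] []

@[simp]
theorem coef_nil_mul (a b : TV θ) : coef [] (a * b) = coef [] a * coef [] b := by
  have : (LinearMap.mul ℂ (TV θ)).compr₂ (coef []) =
      (LinearMap.mul ℂ ℂ).compl₁₂ (coef []) (coef []) :=
    word_hom_ext fun v => word_hom_ext fun w => by
      simp only [LinearMap.compr₂_apply, LinearMap.mul_apply_apply, LinearMap.compl₁₂_apply,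
        ← wordElem_append, coef_word, List.append_eq_nil_iff]
      split_ifs <;> simp_all
  exact LinearMap.congr_fun₂ this a b

@[simp]
theorem coef_nil_gen (i : Fin θ) : coef [] (gen θ i) = 0 := by
  rw [← wordElem_singleton, coef_word]; simp

theorem coef_singleton_gen_mul (a i : Fin θ) (b : TV θ) :
    coef [a] (gen θ i * b) = if i = a then coef [] b else 0 := by
  have : coef [a] ∘ₗ mulLeft ℂ (gen θ i) = if i = a then coef [] else 0 :=
    word_hom_ext fun w => by
      rw [LinearMap.comp_apply, LinearMap.mulLeft_apply, ← wordElem_cons, coef_word]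
      split_ifs <;> simp_all [coef_word]
  have := LinearMap.congr_fun this b
  rw [LinearMap.comp_apply, LinearMap.mulLeft_apply] at this
  rw [this]
  split_ifs <;> simp

theorem coef_singleton_mul_gen (a i : Fin θ) (b : TV θ) :
    coef [a] (b * gen θ i) = if i = a then coef [] b else 0 := by
  have : coef [a] ∘ₗ mulRight ℂ (gen θ i) = if i = a then coef [] else 0 :=
    word_hom_ext fun w => by
      rw [LinearMap.comp_apply, LinearMap.mulRight_apply, ← wordElem_singleton, ← wordElem_append,
        coef_word]
      have : w ++ [i] = [a] ↔ w = [] ∧ i = a := by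
        rcases w with _ | ⟨b, w⟩ <;> simp
      simp only [this]
      split_ifs <;> simp_all [coef_word]
  have := LinearMap.congr_fun this b
  rw [LinearMap.comp_apply, LinearMap.mulRight_apply] at this
  rw [this]
  split_ifs <;> simp

theorem coef_homogTot {n : ℕ} {x : TV θ} (hx : x ∈ homogTot θ n) {w : List (Fin θ)}
    (hw : w.length ≠ n) : coef w x = 0 := by
  suffices homogTot θ n ≤ LinearMap.ker (coef w) from this hx
  refine Submodule.span_le.2 ?_
  rintro _ ⟨v, hv, rfl⟩
  rw [SetLike.mem_coe, LinearMap.mem_ker, coef_word, if_neg]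
  rintro rfl
  exact hw hv

theorem coef_nil_twL (q : Fin θ → Fin θ → ℂˣ) (a : Fin θ → ℕ) (x : TV θ) :
    coef [] (twL q a x) = coef [] x := by
  have : coef [] ∘ₗ (twL q a).toLinearMap = coef [] := word_hom_ext fun w => by
    cases w <;> simp [twL_word, coef_word]
  exact LinearMap.congr_fun this x

theorem coef_singleton_twL (q : Fin θ → Fin θ → ℂˣ) (c : Fin θ → ℕ) (a : Fin θ) (x : TV θ) :
    coef [a] (twL q c x) = qf q c (δ θ a) * coef [a] x := by
  have : coef [a] ∘ₗ (twL q c).toLinearMap = qf q c (δ θ a) • coef [a] := word_hom_ext fun w => by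
    rw [LinearMap.comp_apply, AlgHom.toLinearMap_apply, twL_word, map_smul, LinearMap.smul_apply,
      coef_word]
    split_ifs with h <;> simp [h]
  exact LinearMap.congr_fun this x

theorem conR_coef_nil_opE (q : Fin θ → Fin θ → ℂˣ) (i : Fin θ) (X : TV θ ⊗[ℂ] TV θ) :
    conR (coef []) (opE q i X) = gen θ i * conR (coef []) X := by
  induction X with
  | zero => simp
  | tmul a b => simp
  | add x y hx hy => simp only [map_add, hx, hy, mul_add]

theorem conL_coef_nil_opE (q : Fin θ → Fin θ → ℂˣ) (i : Fin θ) (X : TV θ ⊗[ℂ] TV θ) :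
    conL (coef []) (opE q i X) = gen θ i * conL (coef []) X := by
  induction X with
  | zero => simp
  | tmul a b => simp [coef_nil_twL]
  | add x y hx hy => simp only [map_add, hx, hy, mul_add]

theorem conR_coef_singleton_opE (q : Fin θ → Fin θ → ℂˣ) (a i : Fin θ) (X : TV θ ⊗[ℂ] TV θ) :
    conR (coef [a]) (opE q i X) =
      gen θ i * conR (coef [a]) X + if i = a then twL q (δ θ i) (conR (coef []) X) else 0 := by
  induction X with
  | zero => simp
  | tmul c d =>
    split_ifs with h <;> simp [coef_singleton_gen_mul, h]
  | add x y hx hy =>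
    simp only [map_add, hx, hy, mul_add]
    split_ifs <;> abel

end Contraction

section Coproduct

variable {θ : ℕ} {q : Fin θ → Fin θ → ℂˣ} (S : BraidedStr θ q)

theorem mulB_word_left (a c d : TV θ) (w : List (Fin θ)) :
    S.mulB (a ⊗ₜ wordElem θ w) (c ⊗ₜ d) =
      (a * twL q (degW θ w) c) ⊗ₜ (wordElem θ w * d) := by
  have : (S.mulB (a ⊗ₜ wordElem θ w)) ∘ₗ (TensorProduct.mk ℂ (TV θ) (TV θ)).flip d =
      (TensorProduct.mk ℂ (TV θ) (TV θ)).flip (wordElem θ w * d) ∘ₗ mulLeft ℂ a ∘ₗ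
        (twL q (degW θ w)).toLinearMap :=
    word_hom_ext fun v => by simp [S.mulB_spec, twL_word, TensorProduct.smul_tmul']
  simpa using LinearMap.congr_fun this c

theorem mulB_word_right (a b d : TV θ) (w : List (Fin θ)) :
    S.mulB (a ⊗ₜ b) (wordElem θ w ⊗ₜ d) =
      (a * wordElem θ w) ⊗ₜ (twR q (degW θ w) b * d) := by
  have : (S.mulB.flip (wordElem θ w ⊗ₜ d)) ∘ₗ TensorProduct.mk ℂ (TV θ) (TV θ) a =
      TensorProduct.mk ℂ (TV θ) (TV θ) (a * wordElem θ w) ∘ₗ mulRight ℂ d ∘ₗ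
        (twR q (degW θ w)).toLinearMap :=
    word_hom_ext fun v => by simp [S.mulB_spec, twR_word]
  simpa using LinearMap.congr_fun this b

theorem mulB_gen (i : Fin θ) (X : TV θ ⊗[ℂ] TV θ) :
    S.mulB (gen θ i ⊗ₜ 1 + 1 ⊗ₜ gen θ i) X = opE q i X := by
  induction X with
  | zero => simp
  | tmul c d =>
    have h1 := mulB_word_left S (gen θ i) c d []
    have h2 := mulB_word_left S 1 c d [i]
    simp only [wordElem_nil, degW_nil, twL_zero, one_mul, wordElem_singleton, degW_cons,
      add_zero] at h1 h2
    simp [h1, h2]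
  | add x y hx hy => rw [map_add, hx, hy, map_add]

theorem Δ_gen_mul (i : Fin θ) (b : TV θ) : S.Δ (gen θ i * b) = opE q i (S.Δ b) := by
  rw [S.Δ_mul, S.Δ_gen, mulB_gen]

/-- Right multiplication by `Δ(x_i)` on `T(V) ⊗ T(V)`. -/
theorem mulB_tmul_gen (i : Fin θ) (a b : TV θ) :
    S.mulB (a ⊗ₜ b) (gen θ i ⊗ₜ 1 + 1 ⊗ₜ gen θ i) =
      (a * gen θ i) ⊗ₜ twR q (δ θ i) b + a ⊗ₜ (b * gen θ i) := by
  have h1 := mulB_word_right S a b 1 [i]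
  have h2 := mulB_word_right S a b (gen θ i) []
  simp only [wordElem_nil, degW_nil, twR_zero, mul_one, wordElem_singleton, degW_cons,
    add_zero] at h1 h2
  simp [h1, h2]

theorem conR_coef_nil_Δ (x : TV θ) : conR (coef []) (S.Δ x) = x := by
  have : conR (coef []) ∘ₗ S.Δ = LinearMap.id := word_hom_ext fun w => by
    simp only [LinearMap.comp_apply, LinearMap.id_apply]
    induction w with
    | nil => simp [S.Δ_one]
    | cons i w ih => rw [wordElem_cons, Δ_gen_mul, conR_coef_nil_opE, ih]
  exact LinearMap.congr_fun this x

theorem conL_coef_nil_Δ (x : TV θ) : conL (coef []) (S.Δ x) = x := by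
  have : conL (coef []) ∘ₗ S.Δ = LinearMap.id := word_hom_ext fun w => by
    simp only [LinearMap.comp_apply, LinearMap.id_apply]
    induction w with
    | nil => simp [S.Δ_one]
    | cons i w ih => rw [wordElem_cons, Δ_gen_mul, conL_coef_nil_opE, ih]
  exact LinearMap.congr_fun this x

theorem conL_coef_singleton_mulB (i : Fin θ) (X : TV θ ⊗[ℂ] TV θ) :
    conL (coef [i]) (S.mulB X (gen θ i ⊗ₜ 1 + 1 ⊗ₜ gen θ i)) =
      twR q (δ θ i) (conL (coef []) X) + conL (coef [i]) X * gen θ i := by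
  induction X with
  | zero => simp
  | tmul c d => simp only [mulB_tmul_gen]; simp [coef_singleton_mul_gen]
  | add x y hx hy =>
    simp only [map_add, LinearMap.add_apply] at hx hy ⊢
    rw [add_add_add_comm, hx, hy, add_mul]
    abel

end Coproduct

section Ideals

variable {θ : ℕ} {q : Fin θ → Fin θ → ℂˣ} {S : BraidedStr θ q} {I : Submodule ℂ (TV θ)}

theorem tmul_mem_mixedSub_left {a : TV θ} (ha : a ∈ I) (b : TV θ) :
    a ⊗ₜ[ℂ] b ∈ mixedSub I :=
  Submodule.subset_span (Or.inl ⟨a, b, ha, rfl⟩)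

theorem tmul_mem_mixedSub_right (a : TV θ) {b : TV θ} (hb : b ∈ I) :
    a ⊗ₜ[ℂ] b ∈ mixedSub I :=
  Submodule.subset_span (Or.inr ⟨a, b, hb, rfl⟩)

theorem mixedSub_le {p : Submodule ℂ (TV θ ⊗[ℂ] TV θ)}
    (h : ∀ a b : TV θ, a ∈ I ∨ b ∈ I → a ⊗ₜ[ℂ] b ∈ p) : mixedSub I ≤ p := by
  refine Submodule.span_le.2 ?_
  rintro _ (⟨a, b, ha, rfl⟩ | ⟨a, b, hb, rfl⟩)
  · exact h a b (Or.inl ha)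
  · exact h a b (Or.inr hb)

theorem conR_mem {η : TV θ →ₗ[ℂ] ℂ} (hη : ∀ x ∈ I, η x = 0) {X : TV θ ⊗[ℂ] TV θ}
    (hX : X ∈ mixedSub I) : conR η X ∈ I := by
  suffices mixedSub I ≤ I.comap (conR η) from this hX
  refine mixedSub_le fun a b h => ?_
  rw [Submodule.mem_comap, conR_tmul]
  rcases h with h | h
  · exact I.smul_mem _ h
  · simp [hη b h]

theorem conL_mem {η : TV θ →ₗ[ℂ] ℂ} (hη : ∀ x ∈ I, η x = 0) {X : TV θ ⊗[ℂ] TV θ}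
    (hX : X ∈ mixedSub I) : conL η X ∈ I := by
  suffices mixedSub I ≤ I.comap (conL η) from this hX
  refine mixedSub_le fun a b h => ?_
  rw [Submodule.mem_comap, conL_tmul]
  rcases h with h | h
  · simp [hη a h]
  · exact I.smul_mem _ h

namespace IsPreNicholsIdeal

theorem coef_eq_zero (hI : IsPreNicholsIdeal S I) {w : List (Fin θ)} (hw : w.length < 2)
    (x : TV θ) (hx : x ∈ I) : coef w x = 0 := by
  suffices I ≤ LinearMap.ker (coef w) from this hx
  rw [hI.homog_ge2]
  refine Submodule.span_le.2 ?_
  rintro y ⟨-, n, hn, hy⟩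
  exact coef_homogTot hy (by omega)

theorem twL_δ_mem (hI : IsPreNicholsIdeal S I) (i : Fin θ) {x : TV θ} (hx : x ∈ I) :
    twL q (δ θ i) x ∈ I := by
  have h1 := conR_mem (hI.coef_eq_zero (w := [i]) (by simp))
    (hI.coideal _ (hI.mul_left (gen θ i) x hx))
  have h2 := conR_mem (hI.coef_eq_zero (w := [i]) (by simp)) (hI.coideal x hx)
  rw [Δ_gen_mul, conR_coef_singleton_opE, if_pos rfl, conR_coef_nil_Δ] at h1
  exact (I.add_mem_iff_right (hI.mul_left _ _ h2)).1 h1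

theorem twR_δ_mem (hI : IsPreNicholsIdeal S I) (i : Fin θ) {x : TV θ} (hx : x ∈ I) :
    twR q (δ θ i) x ∈ I := by
  have h1 := conL_mem (hI.coef_eq_zero (w := [i]) (by simp))
    (hI.coideal _ (hI.mul_right (gen θ i) x hx))
  have h2 := conL_mem (hI.coef_eq_zero (w := [i]) (by simp)) (hI.coideal x hx)
  rw [S.Δ_mul, S.Δ_gen, conL_coef_singleton_mulB, conL_coef_nil_Δ] at h1
  exact (I.add_mem_iff_left (hI.mul_right _ _ h2)).1 h1

theorem twL_mem (hI : IsPreNicholsIdeal S I) (w : List (Fin θ)) {x : TV θ} (hx : x ∈ I) :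
    twL q (degW θ w) x ∈ I := by
  induction w with
  | nil => simpa using hx
  | cons i w ih => rw [degW_cons, twL_add]; exact hI.twL_δ_mem i ih

theorem twR_mem (hI : IsPreNicholsIdeal S I) (w : List (Fin θ)) {x : TV θ} (hx : x ∈ I) :
    twR q (degW θ w) x ∈ I := by
  induction w with
  | nil => simpa using hx
  | cons i w ih => rw [degW_cons, twR_add]; exact hI.twR_δ_mem i ih

theorem mulB_mem_right (hI : IsPreNicholsIdeal S I) (X : TV θ ⊗[ℂ] TV θ) {Y : TV θ ⊗[ℂ] TV θ}
    (hY : Y ∈ mixedSub I) : S.mulB X Y ∈ mixedSub I := by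
  suffices mixedSub I ≤ (mixedSub I).comap (S.mulB X) from this hY
  refine mixedSub_le fun c d h => ?_
  rw [Submodule.mem_comap]
  induction X with
  | zero => simp
  | add x y hx hy => rw [map_add]; exact Submodule.add_mem _ hx hy
  | tmul a b =>
    suffices b ∈ (mixedSub I).comap
      (S.mulB.flip (c ⊗ₜ d) ∘ₗ TensorProduct.mk ℂ (TV θ) (TV θ) a) from this
    refine mem_of_words (fun w => ?_) b
    simp only [Submodule.mem_comap, LinearMap.comp_apply, TensorProduct.mk_apply,
      LinearMap.flip_apply, mulB_word_left]
    rcases h with h | h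
    · exact tmul_mem_mixedSub_left (hI.mul_left _ _ (hI.twL_mem w h)) _
    · exact tmul_mem_mixedSub_right _ (hI.mul_left _ _ h)

theorem mulB_mem_left (hI : IsPreNicholsIdeal S I) {X : TV θ ⊗[ℂ] TV θ} (hX : X ∈ mixedSub I)
    (Y : TV θ ⊗[ℂ] TV θ) : S.mulB X Y ∈ mixedSub I := by
  suffices mixedSub I ≤ (mixedSub I).comap (S.mulB.flip Y) from this hX
  refine mixedSub_le fun a b h => ?_
  rw [Submodule.mem_comap, LinearMap.flip_apply]
  induction Y with
  | zero => simp
  | add x y hx hy => rw [map_add]; exact Submodule.add_mem _ hx hy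
  | tmul c d =>
    suffices c ∈ (mixedSub I).comap
      (S.mulB (a ⊗ₜ b) ∘ₗ (TensorProduct.mk ℂ (TV θ) (TV θ)).flip d) from this
    refine mem_of_words (fun w => ?_) c
    simp only [Submodule.mem_comap, LinearMap.comp_apply, TensorProduct.mk_apply,
      LinearMap.flip_apply, mulB_word_right]
    rcases h with h | h
    · exact tmul_mem_mixedSub_left (hI.mul_right _ _ h) _
    · exact tmul_mem_mixedSub_right _ (hI.mul_right _ _ (hI.twR_mem w h))

end IsPreNicholsIdeal

end Ideals

end PreNicholsPaper

namespace PreNicholsPaper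

open LinearMap (mulLeft mulRight)

section Derivations

variable {θ : ℕ} {q : Fin θ → Fin θ → ℂˣ} (S : BraidedStr θ q)

theorem Δ_word_mem (w : List (Fin θ)) :
    S.Δ (wordElem θ w) ∈ Submodule.span ℂ {X : TV θ ⊗[ℂ] TV θ | ∃ u v : List (Fin θ),
      u.length + v.length = w.length ∧ X = wordElem θ u ⊗ₜ wordElem θ v} := by
  induction w with
  | nil =>
    rw [wordElem_nil, S.Δ_one]
    exact Submodule.subset_span ⟨[], [], by simp, by simp⟩
  | cons i w ih =>
    rw [wordElem_cons, Δ_gen_mul, ← Submodule.mem_comap]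
    refine Submodule.span_le.2 ?_ ih
    rintro _ ⟨u, v, h, rfl⟩
    rw [SetLike.mem_coe, Submodule.mem_comap, opE_tmul, twL_word, ← wordElem_cons,
      ← wordElem_cons, ← TensorProduct.smul_tmul']
    refine Submodule.add_mem _ (Submodule.subset_span ⟨_, _, ?_, rfl⟩)
      (Submodule.smul_mem _ _ (Submodule.subset_span ⟨_, _, ?_, rfl⟩))
    · simp only [List.length_cons]; omega
    · simp only [List.length_cons]; omega

theorem conR_Δ_word_mem (η : TV θ →ₗ[ℂ] ℂ) (w : List (Fin θ)) :
    conR η (S.Δ (wordElem θ w)) ∈ Submodule.span ℂ {x | ∃ u v : List (Fin θ),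
      u.length + v.length = w.length ∧ η (wordElem θ v) ≠ 0 ∧ x = wordElem θ u} := by
  rw [← Submodule.mem_comap]
  refine Submodule.span_le.2 ?_ (Δ_word_mem S w)
  rintro _ ⟨u, v, h, rfl⟩
  rw [SetLike.mem_coe, Submodule.mem_comap, conR_tmul]
  by_cases hη : η (wordElem θ v) = 0
  · simp [hη]
  · exact Submodule.smul_mem _ _ (Submodule.subset_span ⟨u, v, h, hη, rfl⟩)

/-- The skew derivation of `T(V)` dual to `x_a`. -/
def skewDer (a : Fin θ) : TV θ →ₗ[ℂ] TV θ := conR (coef [a]) ∘ₗ S.Δ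

theorem skewDer_gen_mul (a i : Fin θ) (b : TV θ) :
    skewDer S a (gen θ i * b) =
      gen θ i * skewDer S a b + if i = a then twL q (δ θ i) b else 0 := by
  rw [skewDer, LinearMap.comp_apply, Δ_gen_mul, conR_coef_singleton_opE, conR_coef_nil_Δ]
  rfl

theorem skewDer_one (a : Fin θ) : skewDer S a 1 = 0 := by
  rw [skewDer, LinearMap.comp_apply, S.Δ_one, conR_tmul]
  have := coef_word [a] []
  simp_all

theorem skewDer_mul (a : Fin θ) (x y : TV θ) :
    skewDer S a (x * y) = x * skewDer S a y + skewDer S a x * twL q (δ θ a) y := by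
  have : (skewDer S a) ∘ₗ mulRight ℂ y =
      mulRight ℂ (skewDer S a y) + mulRight ℂ (twL q (δ θ a) y) ∘ₗ skewDer S a :=
    word_hom_ext fun w => by
      simp only [LinearMap.comp_apply, LinearMap.mulRight_apply, LinearMap.add_apply]
      induction w with
      | nil => simp [skewDer_one]
      | cons i w ih =>
        rw [wordElem_cons, mul_assoc, skewDer_gen_mul, ih, skewDer_gen_mul]
        split_ifs with h
        · subst h; simp only [map_mul]; noncomm_ring
        · noncomm_ring
  exact LinearMap.congr_fun this x

theorem Δ_twL (c : Fin θ → ℕ) (x : TV θ) :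
    S.Δ (twL q c x) = TensorProduct.map (twL q c).toLinearMap (twL q c).toLinearMap (S.Δ x) := by
  have hop : ∀ (i : Fin θ) (X : TV θ ⊗[ℂ] TV θ),
      TensorProduct.map (twL q c).toLinearMap (twL q c).toLinearMap (opE q i X) =
      qf q c (δ θ i) •
        opE q i (TensorProduct.map (twL q c).toLinearMap (twL q c).toLinearMap X) := by
    intro i X
    induction X with
    | zero => simp
    | tmul a b =>
      simp only [opE_tmul, TensorProduct.map_tmul, map_add, AlgHom.toLinearMap_apply, map_mul,
        twL_gen, smul_mul_assoc, TensorProduct.tmul_smul, ← TensorProduct.smul_tmul', smul_add]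
      rw [← twL_add, ← twL_add, add_comm c]
    | add x y hx hy => simp only [map_add, hx, hy, smul_add]
  have : S.Δ ∘ₗ (twL q c).toLinearMap =
      TensorProduct.map (twL q c).toLinearMap (twL q c).toLinearMap ∘ₗ S.Δ :=
    word_hom_ext fun w => by
      simp only [LinearMap.comp_apply, AlgHom.toLinearMap_apply]
      induction w with
      | nil => simp [S.Δ_one]
      | cons i w ih =>
        rw [wordElem_cons, map_mul, twL_gen, smul_mul_assoc, map_smul, Δ_gen_mul, Δ_gen_mul, ih,
          hop]
  exact LinearMap.congr_fun this x

theorem skewDer_twL (c : Fin θ → ℕ) (a : Fin θ) (x : TV θ) :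
    skewDer S a (twL q c x) = qf q c (δ θ a) • twL q c (skewDer S a x) := by
  have h : ∀ X : TV θ ⊗[ℂ] TV θ,
      conR (coef [a]) (TensorProduct.map (twL q c).toLinearMap (twL q c).toLinearMap X) =
        qf q c (δ θ a) • twL q c (conR (coef [a]) X) := by
    intro X
    induction X with
    | zero => simp
    | tmul u v => simp [coef_singleton_twL, smul_smul]
    | add x y hx hy => simp only [map_add, hx, hy, smul_add]
  simp only [skewDer, LinearMap.comp_apply, Δ_twL, h]

theorem Δ_skewDer (a : Fin θ) (x : TV θ) :
    S.Δ (skewDer S a x) = TensorProduct.map LinearMap.id (skewDer S a) (S.Δ x) := by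
  have hop : ∀ (i : Fin θ) (X : TV θ ⊗[ℂ] TV θ),
      TensorProduct.map LinearMap.id (skewDer S a) (opE q i X) =
      opE q i (TensorProduct.map LinearMap.id (skewDer S a) X) +
        if i = a then
          TensorProduct.map (twL q (δ θ i)).toLinearMap (twL q (δ θ i)).toLinearMap X
        else 0 := by
    intro i X
    induction X with
    | zero => simp
    | tmul u v =>
      simp only [opE_tmul, TensorProduct.map_tmul, map_add, skewDer_gen_mul]
      split_ifs <;> simp [TensorProduct.tmul_add, add_assoc]
    | add x y hx hy =>
      simp only [map_add, hx, hy]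
      split_ifs <;> abel
  have : S.Δ ∘ₗ skewDer S a = TensorProduct.map LinearMap.id (skewDer S a) ∘ₗ S.Δ :=
    word_hom_ext fun w => by
      simp only [LinearMap.comp_apply]
      induction w with
      | nil => simp [S.Δ_one, skewDer_one]
      | cons i w ih =>
        rw [wordElem_cons, skewDer_gen_mul, map_add, Δ_gen_mul, Δ_gen_mul, ih, hop]
        split_ifs <;> simp [Δ_twL]
  exact LinearMap.congr_fun this x

/-- The functional on `T(V)` obtained by iterating skew derivations along a word and applying
the counit. -/
def wordFun : List (Fin θ) → (TV θ →ₗ[ℂ] ℂ)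
  | [] => coef []
  | a :: u => wordFun u ∘ₗ skewDer S a

theorem wordFun_nil : wordFun S [] = coef [] := rfl

theorem wordFun_cons (a : Fin θ) (u : List (Fin θ)) (x : TV θ) :
    wordFun S (a :: u) x = wordFun S u (skewDer S a x) := rfl

theorem wordFun_conR (u v : List (Fin θ)) (x : TV θ) :
    wordFun S u (conR (wordFun S v) (S.Δ x)) = wordFun S (v ++ u) x := by
  induction v generalizing x with
  | nil => rw [wordFun_nil, conR_coef_nil_Δ, List.nil_append]
  | cons a v ih =>
    rw [List.cons_append, wordFun_cons, ← ih, Δ_skewDer]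
    congr 1
    generalize S.Δ x = X
    induction X with
    | zero => simp
    | tmul c d => simp [wordFun_cons]
    | add x y hx hy => simp only [map_add, hx, hy]

theorem wordFun_twL (c : Fin θ → ℕ) (u : List (Fin θ)) (x : TV θ) :
    wordFun S u (twL q c x) = qf q c (degW θ u) * wordFun S u x := by
  induction u generalizing x with
  | nil => simp [wordFun_nil, coef_nil_twL]
  | cons a u ih =>
    rw [wordFun_cons, skewDer_twL, map_smul, ih, wordFun_cons, degW_cons, qf_add_right,
      smul_eq_mul, mul_assoc]

theorem wordFun_word {u w : List (Fin θ)} (h : u.length ≠ w.length) :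
    wordFun S u (wordElem θ w) = 0 := by
  induction u generalizing w with
  | nil =>
    rw [wordFun_nil, coef_word, if_neg]
    rintro rfl
    exact h rfl
  | cons a u ih =>
    rw [wordFun_cons, ← LinearMap.mem_ker]
    refine Submodule.span_le.2 ?_ (conR_Δ_word_mem S (coef [a]) w)
    rintro _ ⟨v, v', hl, hv, rfl⟩
    rw [coef_word] at hv
    have hv' : v' = [a] := by simpa using hv
    subst hv'
    refine ih fun hu => h ?_
    rw [← hl, List.length_cons, hu]
    simp

end Derivations

section Grading

variable {θ : ℕ}

/-- The projection of `T(V)` to its component of total degree `n`. -/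
def proj (n : ℕ) : TV θ →ₗ[ℂ] TV θ :=
  (wordBasis θ).constr ℂ fun w => if w.length = n then wordElem θ w else 0

theorem proj_word (n : ℕ) (w : List (Fin θ)) :
    proj n (wordElem θ w) = if w.length = n then wordElem θ w else 0 := by
  simpa [proj] using
    (wordBasis θ).constr_basis ℂ (fun w => if w.length = n then wordElem θ w else 0) w

theorem proj_mem (n : ℕ) (x : TV θ) : proj n x ∈ homogTot θ n := by
  rw [← Submodule.mem_comap]
  refine mem_of_words (fun w => ?_) x
  rw [Submodule.mem_comap, proj_word]
  split_ifs with h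
  · exact Submodule.subset_span ⟨w, h, rfl⟩
  · exact Submodule.zero_mem _

theorem proj_of_mem {m : ℕ} {x : TV θ} (hx : x ∈ homogTot θ m) (n : ℕ) :
    proj n x = if m = n then x else 0 := by
  have : homogTot θ m ≤
      LinearMap.ker (proj n - if m = n then LinearMap.id else (0 : TV θ →ₗ[ℂ] TV θ)) := by
    refine Submodule.span_le.2 ?_
    rintro _ ⟨w, rfl, rfl⟩
    rw [SetLike.mem_coe, LinearMap.mem_ker, LinearMap.sub_apply, proj_word]
    split_ifs <;> simp
  have := this hx
  rw [LinearMap.mem_ker, LinearMap.sub_apply, sub_eq_zero] at this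
  rw [this]
  split_ifs <;> simp

theorem exists_sum_proj (x : TV θ) : ∃ M, ∀ N, M ≤ N → ∑ n ∈ Finset.range N, proj n x = x := by
  have hx : x ∈ Submodule.span ℂ (Set.range (wordElem θ)) := by rw [span_words]; trivial
  induction hx using Submodule.span_induction with
  | mem x hx =>
    obtain ⟨w, rfl⟩ := hx
    refine ⟨w.length + 1, fun N hN => ?_⟩
    simp only [proj_word]
    rw [Finset.sum_ite_eq, if_pos (by simpa using hN)]
  | zero => exact ⟨0, by simp⟩
  | add x y _ _ hx hy =>
    obtain ⟨M₁, h₁⟩ := hx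
    obtain ⟨M₂, h₂⟩ := hy
    refine ⟨max M₁ M₂, fun N hN => ?_⟩
    simp only [map_add, Finset.sum_add_distrib]
    rw [h₁ N (le_of_max_le_left hN), h₂ N (le_of_max_le_right hN)]
  | smul c x _ hx =>
    obtain ⟨M, hM⟩ := hx
    refine ⟨M, fun N hN => ?_⟩
    simp only [map_smul, ← Finset.smul_sum]
    rw [hM N hN]

/-- An element lies in a submodule as soon as its homogeneous components do. -/
theorem mem_of_proj_mem {p : Submodule ℂ (TV θ)} {x : TV θ} (h : ∀ n, proj n x ∈ p) : x ∈ p := by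
  obtain ⟨M, hM⟩ := exists_sum_proj x
  rw [← hM M le_rfl]
  exact Submodule.sum_mem _ fun n _ => h n

theorem IsPreNicholsIdeal.proj_mem {q : Fin θ → Fin θ → ℂˣ} {S : BraidedStr θ q}
    {I : Submodule ℂ (TV θ)} (hI : IsPreNicholsIdeal S I) (n : ℕ) {x : TV θ} (hx : x ∈ I) :
    proj n x ∈ I := by
  suffices I ≤ I.comap (proj n) from this hx
  conv_lhs => rw [hI.homog_ge2]
  refine Submodule.span_le.2 ?_
  rintro y ⟨hy, m, -, hm⟩
  rw [SetLike.mem_coe, Submodule.mem_comap, proj_of_mem hm]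
  split_ifs
  · exact hy
  · exact I.zero_mem

end Grading

section Radical

variable {θ : ℕ} {q : Fin θ → Fin θ → ℂˣ} (S : BraidedStr θ q)

/-- The common kernel of all iterated skew derivations followed by the counit. -/
def radical : Submodule ℂ (TV θ) := ⨅ u, LinearMap.ker (wordFun S u)

theorem mem_radical {x : TV θ} : x ∈ radical S ↔ ∀ u, wordFun S u x = 0 := by
  simp [radical]

theorem skewDer_mem_radical {x : TV θ} (hx : x ∈ radical S) (a : Fin θ) :
    skewDer S a x ∈ radical S :=
  (mem_radical S).2 fun u => (mem_radical S).1 hx (a :: u)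

theorem twL_mem_radical {x : TV θ} (hx : x ∈ radical S) (c : Fin θ → ℕ) :
    twL q c x ∈ radical S :=
  (mem_radical S).2 fun u => by rw [wordFun_twL, (mem_radical S).1 hx u, mul_zero]

theorem mul_left_mem_radical (a : TV θ) {x : TV θ} (hx : x ∈ radical S) : a * x ∈ radical S := by
  refine (mem_radical S).2 fun u => ?_
  induction u generalizing a x with
  | nil =>
    have := (mem_radical S).1 hx []
    rw [wordFun_nil] at this ⊢
    rw [coef_nil_mul, this, mul_zero]
  | cons b u ih =>
    rw [wordFun_cons, skewDer_mul, map_add, ih _ (skewDer_mem_radical S hx b),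
      ih _ (twL_mem_radical S hx _), add_zero]

theorem mul_right_mem_radical (a : TV θ) {x : TV θ} (hx : x ∈ radical S) : x * a ∈ radical S := by
  refine (mem_radical S).2 fun u => ?_
  induction u generalizing a x with
  | nil =>
    have := (mem_radical S).1 hx []
    rw [wordFun_nil] at this ⊢
    rw [coef_nil_mul, this, zero_mul]
  | cons b u ih =>
    rw [wordFun_cons, skewDer_mul, map_add, ih _ hx, ih _ (skewDer_mem_radical S hx b), add_zero]

theorem wordFun_proj (u : List (Fin θ)) (n : ℕ) (x : TV θ) :
    wordFun S u (proj n x) = if u.length = n then wordFun S u x else 0 := by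
  have : wordFun S u ∘ₗ proj n = if u.length = n then wordFun S u else 0 :=
    word_hom_ext fun w => by
      rw [LinearMap.comp_apply, proj_word]
      by_cases hw : u.length = w.length
      · rw [hw]; split_ifs <;> simp
      · split_ifs <;> simp [wordFun_word S hw]
  have := LinearMap.congr_fun this x
  rw [LinearMap.comp_apply] at this
  rw [this]
  split_ifs <;> simp

theorem proj_mem_radical {x : TV θ} (hx : x ∈ radical S) (n : ℕ) : proj n x ∈ radical S :=
  (mem_radical S).2 fun u => by
    rw [wordFun_proj, (mem_radical S).1 hx u, ite_self]

theorem eq_zero_of_mem_radical {n : ℕ} (hn : n < 2) {x : TV θ} (hx : x ∈ radical S)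
    (hxn : x ∈ homogTot θ n) : x = 0 := by
  have hcoef : ∀ w, coef w x = 0 := by
    intro w
    by_cases hw : w.length = n
    · rcases w with _ | ⟨a, _ | ⟨b, w⟩⟩
      · exact (mem_radical S).1 hx []
      · have h := (mem_radical S).1 hx [a]
        rw [wordFun_cons, wordFun_nil, skewDer, LinearMap.comp_apply] at h
        have hc : ∀ X : TV θ ⊗[ℂ] TV θ,
            coef [] (conR (coef [a]) X) = coef [a] (conL (coef []) X) := by
          intro X
          induction X with
          | zero => simp
          | tmul c d => simp [mul_comm]
          | add x y hx hy => simp only [map_add, hx, hy]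
        rwa [hc, conL_coef_nil_Δ] at h
      · simp only [List.length_cons] at hw
        omega
    · exact coef_homogTot hxn hw
  exact (wordBasis θ).ext_elem fun w => by simpa [coef] using hcoef w

theorem eq_zero_of_separating {M N ι : Type*} [AddCommGroup M] [Module ℂ M] [AddCommGroup N]
    [Module ℂ N] (f : ι → M →ₗ[ℂ] ℂ) (hf : ∀ m, (∀ i, f i m = 0) → m = 0) (Z : M ⊗[ℂ] N)
    (hZ : ∀ i, TensorProduct.map (f i) LinearMap.id Z = 0) : Z = 0 := by
  let b := Module.Basis.ofVectorSpace ℂ N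
  obtain ⟨c, rfl⟩ := TensorProduct.eq_repr_basis_right b Z
  have hc : c = 0 := by
    ext k
    refine hf _ fun i => ?_
    have h := congrArg (b.coord k ∘ₗ (TensorProduct.lid ℂ N).toLinearMap) (hZ i)
    simp only [Finsupp.sum, map_sum, TensorProduct.map_tmul, LinearMap.id_apply,
      LinearMap.comp_apply, LinearEquiv.coe_coe, TensorProduct.lid_tmul, map_smul,
      Module.Basis.coord_apply, Module.Basis.repr_self, smul_eq_mul, map_zero] at h
    rwa [Finset.sum_eq_single k (fun l _ hl => by rw [Finsupp.single_eq_of_ne hl.symm, mul_zero])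
      (fun hk => by rw [Finsupp.notMem_support_iff.1 hk, map_zero, zero_mul]),
      Finsupp.single_eq_same, mul_one] at h
  simp [hc]

theorem mem_mixedSub_radical {X : TV θ ⊗[ℂ] TV θ}
    (hX : ∀ u v, wordFun S u (conR (wordFun S v) X) = 0) : X ∈ mixedSub (radical S) := by
  let N := radical S
  let f : List (Fin θ) → (TV θ ⧸ N) →ₗ[ℂ] ℂ := fun u =>
    N.liftQ (wordFun S u) fun x hx => (mem_radical S).1 hx u
  have hf : ∀ m, (∀ u, f u m = 0) → m = 0 := by
    intro m hm
    obtain ⟨x, rfl⟩ := N.mkQ_surjective m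
    exact (Submodule.Quotient.mk_eq_zero N).2 ((mem_radical S).2 fun u => hm u)
  have hzero : TensorProduct.map N.mkQ N.mkQ X = 0 := by
    refine eq_zero_of_separating f hf _ fun u => ?_
    refine (TensorProduct.lid ℂ (TV θ ⧸ N)).injective ?_
    rw [map_zero]
    refine hf _ fun v => ?_
    rw [← hX u v]
    generalize X = Y
    induction Y with
    | zero => simp
    | tmul a b =>
      have hl : ∀ w x, f w (N.mkQ x) = wordFun S w x := fun _ _ => rfl
      simp only [TensorProduct.map_tmul, LinearMap.id_apply, TensorProduct.lid_tmul, map_smul, hl,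
        conR_tmul, smul_eq_mul]
      ring
    | add x y hx hy => simp only [map_add, hx, hy]
  have hmem : X ∈ LinearMap.ker (TensorProduct.map N.mkQ N.mkQ) := hzero
  rw [TensorProduct.map_ker (LinearMap.exact_subtype_mkQ N) N.mkQ_surjective
    (LinearMap.exact_subtype_mkQ N) N.mkQ_surjective] at hmem
  refine (sup_le ?_ ?_ : _ ≤ mixedSub N) hmem
  · rintro _ ⟨Z, rfl⟩
    induction Z with
    | zero => simp
    | tmul a b => exact tmul_mem_mixedSub_right a b.2
    | add x y hx hy => rw [map_add]; exact Submodule.add_mem _ hx hy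
  · rintro _ ⟨Z, rfl⟩
    induction Z with
    | zero => simp
    | tmul a b => exact tmul_mem_mixedSub_left a.2 b
    | add x y hx hy => rw [map_add]; exact Submodule.add_mem _ hx hy

theorem radical_isPreNicholsIdeal : IsPreNicholsIdeal S (radical S) where
  mul_left a _ hx := mul_left_mem_radical S a hx
  mul_right a _ hx := mul_right_mem_radical S a hx
  homog_ge2 := by
    refine le_antisymm (fun x hx => mem_of_proj_mem fun n => ?_)
      (Submodule.span_le.2 fun x hx => hx.1)
    by_cases hn : 2 ≤ n
    · exact Submodule.subset_span ⟨proj_mem_radical S hx n, n, hn, proj_mem n x⟩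
    · rw [eq_zero_of_mem_radical S (not_le.1 hn) (proj_mem_radical S hx n) (proj_mem n x)]
      exact Submodule.zero_mem _
  coideal x hx := mem_mixedSub_radical S fun u v => by
    rw [wordFun_conR]
    exact (mem_radical S).1 hx _

theorem radical_le_Jq : radical S ≤ Jq S :=
  le_sSup (radical_isPreNicholsIdeal S)

end Radical

end PreNicholsPaper

namespace PreNicholsPaper

section Dimension

variable {T X Y : Type*} [AddCommGroup T] [Module ℂ T] [AddCommGroup X] [Module ℂ X]
  [AddCommGroup Y] [Module ℂ Y] {f : T →ₗ[ℂ] X} {g : T →ₗ[ℂ] Y}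

theorem exists_lift_disjoint_ker {A B L : Submodule ℂ T} (hAB : A ≤ B) (hLA : L ≤ A)
    (hg : A.map g ≤ L.map g) (hf : Disjoint L (LinearMap.ker f))
    (h : ∀ x ∈ B, f x = 0 → g x ∈ A.map g) :
    ∃ M ≤ B, B.map g ≤ M.map g ∧ Disjoint M (LinearMap.ker f) := by
  set P := A ⊔ (LinearMap.ker f ⊓ B) with hP
  have hPB : P ≤ B := sup_le hAB inf_le_right
  obtain ⟨Q, hQ⟩ := exists_isCompl P
  have hsup : P ⊔ Q ⊓ B = B := by
    rw [← sup_inf_assoc_of_le _ hPB, hQ.sup_eq_top, top_inf_eq]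
  refine ⟨L ⊔ Q ⊓ B, sup_le (hLA.trans hAB) inf_le_right, ?_, ?_⟩
  · have hker : (LinearMap.ker f ⊓ B).map g ≤ A.map g := by
      rintro _ ⟨x, ⟨hx, hxB⟩, rfl⟩
      exact h x hxB hx
    conv_lhs => rw [← hsup, hP]
    rw [Submodule.map_sup, Submodule.map_sup, Submodule.map_sup]
    exact sup_le_sup_right ((sup_le le_rfl hker).trans hg) _
  · rw [Submodule.disjoint_def]
    intro x hx hfx
    obtain ⟨l, hl, c, ⟨hcQ, hcB⟩, rfl⟩ := Submodule.mem_sup.1 hx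
    have hlB : l ∈ B := hAB (hLA hl)
    have hc : c = 0 := by
      refine (Submodule.disjoint_def.1 hQ.disjoint) c ?_ hcQ
      have : c = -l + (l + c) := by abel
      rw [this]
      exact Submodule.add_mem_sup (A.neg_mem (hLA hl)) ⟨hfx, B.add_mem hlB hcB⟩
    rw [hc, add_zero] at hfx ⊢
    exact Submodule.disjoint_def.1 hf l hl hfx

/-- If the kernel of `f` is contained in that of `g` up to lower filtration degree, then the images
of the filtration steps under `g` are not bigger than those under `f`. -/
theorem finrank_map_le_of_filtration {F : ℕ → Submodule ℂ T} (hF : Monotone F)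
    [∀ n, FiniteDimensional ℂ (F n)] (h0 : ∀ x ∈ F 0, f x = 0 → g x = 0)
    (hs : ∀ n, ∀ x ∈ F (n + 1), f x = 0 → g x ∈ (F n).map g) (n : ℕ) :
    Module.finrank ℂ ((F n).map g) ≤ Module.finrank ℂ ((F n).map f) := by
  have key : ∃ L ≤ F n, (F n).map g ≤ L.map g ∧ Disjoint L (LinearMap.ker f) := by
    induction n with
    | zero =>
      exact exists_lift_disjoint_ker (A := ⊥) (L := ⊥) bot_le le_rfl le_rfl disjoint_bot_left
        fun x hx hfx => by rw [h0 x hx hfx]; exact Submodule.zero_mem _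
    | succ n ih =>
      obtain ⟨L, hL, hg, hf⟩ := ih
      exact exists_lift_disjoint_ker (hF n.le_succ) hL hg hf (hs n)
  obtain ⟨L, hL, hg, hf⟩ := key
  have : FiniteDimensional ℂ L := Submodule.finiteDimensional_of_le hL
  calc Module.finrank ℂ ((F n).map g) ≤ Module.finrank ℂ (L.map g) := Submodule.finrank_mono hg
    _ ≤ Module.finrank ℂ L := Submodule.finrank_map_le g L
    _ = Module.finrank ℂ (L.map f) := by
      rw [← LinearMap.range_domRestrict]
      exact (LinearEquiv.ofInjective (f.domRestrict L)
        (LinearMap.injective_domRestrict_iff.2 hf)).finrank_eq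
    _ ≤ Module.finrank ℂ ((F n).map f) := Submodule.finrank_mono (Submodule.map_mono hL)

end Dimension

section Filtration

variable {θ : ℕ}

theorem wordElem_mem_Wfil {w : List (Fin θ)} {n : ℕ} (h : w.length ≤ n) :
    wordElem θ w ∈ Wfil θ n :=
  Submodule.subset_span ⟨w, h, rfl⟩

theorem Wfil_mono : Monotone (Wfil θ) := by
  intro m n hmn
  refine Submodule.span_le.2 ?_
  rintro _ ⟨w, hw, rfl⟩
  exact wordElem_mem_Wfil (hw.trans hmn)

instance (n : ℕ) : FiniteDimensional ℂ (Wfil θ n) := by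
  refine FiniteDimensional.span_of_finite ℂ ?_
  refine ((List.finite_length_le (Fin θ) n).image (wordElem θ)).subset ?_
  rintro _ ⟨w, hw, rfl⟩
  exact ⟨w, hw, rfl⟩

theorem mul_mem_Wfil {m n : ℕ} {x y : TV θ} (hx : x ∈ Wfil θ m) (hy : y ∈ Wfil θ n) :
    x * y ∈ Wfil θ (m + n) := by
  have h : Wfil θ m * Wfil θ n ≤ Wfil θ (m + n) := by
    rw [Wfil, Wfil, Submodule.span_mul_span]
    refine Submodule.span_le.2 ?_
    rintro _ ⟨_, ⟨v, hv, rfl⟩, _, ⟨w, hw, rfl⟩, rfl⟩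
    simp only [← wordElem_append]
    exact wordElem_mem_Wfil (by simp only [List.length_append]; omega)
  exact h (Submodule.mul_mem_mul hx hy)

theorem homogTot_le_Wfil {m n : ℕ} (h : m ≤ n) : homogTot θ m ≤ Wfil θ n := by
  refine Submodule.span_le.2 ?_
  rintro _ ⟨w, rfl, rfl⟩
  exact wordElem_mem_Wfil h

theorem eq_smul_one_of_mem_Wfil_zero {x : TV θ} (hx : x ∈ Wfil θ 0) :
    x = coef [] x • (1 : TV θ) := by
  induction hx using Submodule.span_induction with
  | mem x hx =>
    obtain ⟨w, hw, rfl⟩ := hx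
    rw [List.length_eq_zero_iff.1 (Nat.le_zero.1 hw)]
    simp
  | zero => simp
  | add x y _ _ hx hy => rw [map_add, add_smul, ← hx, ← hy]
  | smul c x _ hx => rw [map_smul, smul_assoc, ← hx]

theorem sub_proj_mem_Wfil {n : ℕ} {x : TV θ} (hx : x ∈ Wfil θ (n + 1)) :
    x - proj (n + 1) x ∈ Wfil θ n := by
  suffices Wfil θ (n + 1) ≤ (Wfil θ n).comap (LinearMap.id - proj (n + 1)) from this hx
  refine Submodule.span_le.2 ?_
  rintro _ ⟨w, hw, rfl⟩
  rw [SetLike.mem_coe, Submodule.mem_comap, LinearMap.sub_apply, LinearMap.id_apply, proj_word]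
  split_ifs with h
  · rw [sub_self]; exact Submodule.zero_mem _
  · rw [sub_zero]; exact wordElem_mem_Wfil (by omega)

end Filtration

section Transfer

variable {θ θ' : ℕ} {q : Fin θ → Fin θ → ℂˣ} {q' : Fin θ' → Fin θ' → ℂˣ}
  {S : BraidedStr θ q} {I : Submodule ℂ (TV θ)}

/-- The elements `y_a`, homogeneous of multidegree `d_a`, are primitive in `T(V)/I`, span there a
braided subspace with braiding matrix `q'`, and are linearly independent, as witnessed by
the functionals `ξ_a`. -/
structure IsPrimitiveFamily (S : BraidedStr θ q) (I : Submodule ℂ (TV θ))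
    (q' : Fin θ' → Fin θ' → ℂˣ) (d : Fin θ' → Fin θ → ℕ) (y : Fin θ' → TV θ)
    (ξ : Fin θ' → TV θ →ₗ[ℂ] ℂ) : Prop where
  braiding : ∀ a b, (q' a b : ℂ) = qf q (d a) (d b)
  homog : ∀ a, y a ∈ homogD θ (d a)
  primitive : ∀ a, S.Δ (y a) - (y a ⊗ₜ 1 + 1 ⊗ₜ y a) ∈ mixedSub I
  dual_ideal : ∀ a, ∀ x ∈ I, ξ a x = 0
  dual_one : ∀ a, ξ a 1 = 0
  dual : ∀ a b, ξ a (y b) = if b = a then 1 else 0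

theorem twL_of_mem_homogD {e : Fin θ → ℕ} {y : TV θ} (hy : y ∈ homogD θ e) (c : Fin θ → ℕ) :
    twL q c y = qf q c e • y := by
  induction hy using Submodule.span_induction with
  | mem x hx => obtain ⟨w, rfl, rfl⟩ := hx; exact twL_word q c w
  | zero => simp
  | add x y _ _ hx hy => rw [map_add, hx, hy, smul_add]
  | smul c x _ hx => rw [map_smul, hx, smul_comm]

theorem mulB_primitive (S : BraidedStr θ q) {e : Fin θ → ℕ} {y : TV θ} (hy : y ∈ homogD θ e)
    (c b : TV θ) :
    S.mulB (y ⊗ₜ 1 + 1 ⊗ₜ y) (c ⊗ₜ b) = (y * c) ⊗ₜ b + twL q e c ⊗ₜ (y * b) := by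
  have h2 : S.mulB (1 ⊗ₜ y) (c ⊗ₜ b) = twL q e c ⊗ₜ (y * b) := by
    induction hy using Submodule.span_induction with
    | mem x hx =>
      obtain ⟨w, rfl, rfl⟩ := hx
      rw [mulB_word_left, one_mul]
    | zero => simp
    | add x y _ _ hx hy =>
      rw [TensorProduct.tmul_add, map_add, LinearMap.add_apply, hx, hy, add_mul,
        TensorProduct.tmul_add]
    | smul r x _ hx =>
      rw [TensorProduct.tmul_smul, map_smul, LinearMap.smul_apply, hx, smul_mul_assoc,
        TensorProduct.tmul_smul]
  have h1 := mulB_word_left S y c b []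
  simp only [wordElem_nil, degW_nil, twL_zero, one_mul] at h1
  rw [map_add, LinearMap.add_apply, h1, h2]

namespace IsPrimitiveFamily

variable {d : Fin θ' → Fin θ → ℕ} {y : Fin θ' → TV θ} {ξ : Fin θ' → TV θ →ₗ[ℂ] ℂ}

theorem lift_gen (a : Fin θ') : FreeAlgebra.lift ℂ y (gen θ' a) = y a := by
  simp [gen]

theorem twL_lift (hy : IsPrimitiveFamily S I q' d y ξ) (a : Fin θ') (x : TV θ') :
    twL q (d a) (FreeAlgebra.lift ℂ y x) = FreeAlgebra.lift ℂ y (twL q' (δ θ' a) x) := by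
  have : (twL q (d a)).comp (FreeAlgebra.lift ℂ y) =
      (FreeAlgebra.lift ℂ y).comp (twL q' (δ θ' a)) := by
    refine FreeAlgebra.hom_ext (funext fun b => ?_)
    change twL q (d a) (FreeAlgebra.lift ℂ y (gen θ' b)) =
      FreeAlgebra.lift ℂ y (twL q' (δ θ' a) (gen θ' b))
    rw [twL_gen, map_smul, lift_gen, qf_δ, hy.braiding, twL_of_mem_homogD (hy.homog b)]
  exact DFunLike.congr_fun this x

theorem Δ_lift (hI : IsPreNicholsIdeal S I) (hy : IsPrimitiveFamily S I q' d y ξ)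
    (S' : BraidedStr θ' q') (x : TV θ') :
    S.Δ (FreeAlgebra.lift ℂ y x) - TensorProduct.map (FreeAlgebra.lift ℂ y).toLinearMap
      (FreeAlgebra.lift ℂ y).toLinearMap (S'.Δ x) ∈ mixedSub I := by
  set φ := FreeAlgebra.lift ℂ y with hφ
  set Φ := TensorProduct.map φ.toLinearMap φ.toLinearMap with hΦ
  have hop : ∀ (a : Fin θ') (X : TV θ' ⊗[ℂ] TV θ'),
      Φ (opE q' a X) = S.mulB (y a ⊗ₜ 1 + 1 ⊗ₜ y a) (Φ X) := by
    intro a X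
    induction X with
    | zero => simp
    | tmul u v =>
      rw [hΦ, TensorProduct.map_tmul, mulB_primitive S (hy.homog a), opE_tmul, map_add,
        TensorProduct.map_tmul, TensorProduct.map_tmul]
      simp only [AlgHom.toLinearMap_apply, map_mul, hφ, lift_gen, hy.twL_lift]
    | add x y hx hy => simp only [map_add, hx, hy]
  refine mem_of_words (p := (mixedSub I).comap (S.Δ ∘ₗ φ.toLinearMap - Φ ∘ₗ S'.Δ)) (fun w => ?_) x
  rw [Submodule.mem_comap, LinearMap.sub_apply, LinearMap.comp_apply, LinearMap.comp_apply,
    AlgHom.toLinearMap_apply]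
  induction w with
  | nil => simp [S.Δ_one, S'.Δ_one, hΦ]
  | cons a w ih =>
    rw [wordElem_cons, map_mul, hφ, lift_gen, ← hφ, S.Δ_mul, Δ_gen_mul, hop]
    have h1 := hI.mulB_mem_left (hy.primitive a) (S.Δ (φ (wordElem θ' w)))
    have h2 := hI.mulB_mem_right (y a ⊗ₜ 1 + 1 ⊗ₜ y a) ih
    have := Submodule.add_mem _ h1 h2
    rwa [map_sub, LinearMap.sub_apply, map_sub, sub_add_sub_cancel] at this

theorem lift_conR_mem (hI : IsPreNicholsIdeal S I) (hy : IsPrimitiveFamily S I q' d y ξ)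
    (S' : BraidedStr θ' q') (a : Fin θ') {x : TV θ'} (hx : FreeAlgebra.lift ℂ y x ∈ I) :
    FreeAlgebra.lift ℂ y
      (conR (ξ a ∘ₗ (FreeAlgebra.lift ℂ y).toLinearMap) (S'.Δ x)) ∈ I := by
  have h := (Submodule.sub_mem_iff_right _ (hI.coideal _ hx)).1 (hy.Δ_lift hI S' x)
  have := conR_mem (hy.dual_ideal a) h
  convert this using 1
  generalize S'.Δ x = X
  induction X with
  | zero => simp
  | tmul u v => simp
  | add x y hx hy => simp only [map_add, hx, hy]

theorem dual_lift_word (hy : IsPrimitiveFamily S I q' d y ξ) (a : Fin θ') {w : List (Fin θ')}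
    (hw : w.length < 2) : ξ a (FreeAlgebra.lift ℂ y (wordElem θ' w)) = coef [a] (wordElem θ' w) := by
  rw [coef_word]
  rcases w with _ | ⟨b, _ | ⟨c, w⟩⟩
  · simp [hy.dual_one]
  · rw [wordElem_singleton, lift_gen, hy.dual]
    simp
  · simp only [List.length_cons] at hw
    omega

theorem wordFun_eq_zero (hI : IsPreNicholsIdeal S I) (hy : IsPrimitiveFamily S I q' d y ξ)
    (S' : BraidedStr θ' q') (u : List (Fin θ')) {x : TV θ'} (hxu : x ∈ Wfil θ' u.length)
    (hx : FreeAlgebra.lift ℂ y x ∈ I) : wordFun S' u x = 0 := by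
  induction u generalizing x with
  | nil =>
    rw [eq_smul_one_of_mem_Wfil_zero hxu, map_smul, map_one] at hx
    simpa [wordFun_nil] using hI.coef_eq_zero (w := []) (by simp) _ hx
  | cons a u ih =>
    set η := ξ a ∘ₗ (FreeAlgebra.lift ℂ y).toLinearMap with hη
    have hD : conR η (S'.Δ x) ∈ Wfil θ' u.length := by
      suffices Wfil θ' (a :: u).length ≤ (Wfil θ' u.length).comap (conR η ∘ₗ S'.Δ) from this hxu
      refine Submodule.span_le.2 ?_
      rintro _ ⟨w, hw, rfl⟩
      rw [SetLike.mem_coe, Submodule.mem_comap, LinearMap.comp_apply]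
      refine Submodule.span_le.2 ?_ (conR_Δ_word_mem S' η w)
      rintro _ ⟨v, v', hl, hv, rfl⟩
      refine wordElem_mem_Wfil ?_
      have : v'.length ≠ 0 := by
        rintro h
        rw [List.length_eq_zero_iff.1 h] at hv
        simp [hη, hy.dual_one] at hv
      simp only [List.length_cons] at hw
      omega
    have hdiff : wordFun S' u (conR (coef [a] - η) (S'.Δ x)) = 0 := by
      suffices Wfil θ' (a :: u).length ≤
          LinearMap.ker (wordFun S' u ∘ₗ conR (coef [a] - η) ∘ₗ S'.Δ) from this hxu
      refine Submodule.span_le.2 ?_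
      rintro _ ⟨w, hw, rfl⟩
      rw [SetLike.mem_coe, LinearMap.mem_ker, LinearMap.comp_apply, LinearMap.comp_apply,
        ← LinearMap.mem_ker]
      refine Submodule.span_le.2 ?_ (conR_Δ_word_mem S' (coef [a] - η) w)
      rintro _ ⟨v, v', hl, hv, rfl⟩
      refine wordFun_word S' ?_
      have : ¬ v'.length < 2 := fun h => hv (by
        rw [LinearMap.sub_apply, hη, LinearMap.comp_apply, AlgHom.toLinearMap_apply,
          hy.dual_lift_word a h, sub_self])
      simp only [List.length_cons] at hw
      omega
    have hsub : conR (coef [a] - η) (S'.Δ x) = skewDer S' a x - conR η (S'.Δ x) := by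
      rw [skewDer, LinearMap.comp_apply]
      generalize S'.Δ x = X
      induction X with
      | zero => simp
      | tmul u v => simp [sub_smul]
      | add x y hx hy => simp only [map_add, hx, hy]; abel
    rw [hsub, map_sub, ih hD (hy.lift_conR_mem hI S' a hx), sub_zero] at hdiff
    exact hdiff

theorem proj_mem_radical (hI : IsPreNicholsIdeal S I) (hy : IsPrimitiveFamily S I q' d y ξ)
    (S' : BraidedStr θ' q') {n : ℕ} {x : TV θ'} (hxn : x ∈ Wfil θ' n)
    (hx : FreeAlgebra.lift ℂ y x ∈ I) : proj n x ∈ radical S' := by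
  refine (mem_radical S').2 fun u => ?_
  rw [wordFun_proj]
  split_ifs with h
  · subst h
    exact hy.wordFun_eq_zero hI S' u hxn hx
  · rfl

/-- If `T(V)/I` has finite Gelfand–Kirillov dimension, then so has the Nichols algebra of the
braided subspace spanned by a family of primitive elements. -/
theorem finGK (hI : IsPreNicholsIdeal S I) (hGK : FinGK I)
    (hy : IsPrimitiveFamily S I q' d y ξ) (S' : BraidedStr θ' q') {D : ℕ}
    (hD : ∀ a, y a ∈ Wfil θ D) : FinGK (Jq S') := by
  obtain ⟨C, e, hC⟩ := hGK
  set φ := FreeAlgebra.lift ℂ y with hφ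
  refine ⟨C * (D + 1) ^ e, e, fun n => ?_⟩
  have hle : Module.finrank ℂ ((Wfil θ' n).map (Jq S').mkQ) ≤
      Module.finrank ℂ ((Wfil θ' n).map (I.mkQ ∘ₗ φ.toLinearMap)) := by
    refine finrank_map_le_of_filtration Wfil_mono (fun x hx hfx => ?_) (fun n x hx hfx => ?_) n
    · have hxI : φ x ∈ I := (Submodule.Quotient.mk_eq_zero I).1 hfx
      have h := hy.proj_mem_radical hI S' hx hxI
      rw [eq_smul_one_of_mem_Wfil_zero hx, map_smul, ← wordElem_nil, proj_word, if_pos List.length_nil,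
        wordElem_nil, ← eq_smul_one_of_mem_Wfil_zero hx] at h
      exact (Submodule.Quotient.mk_eq_zero _).2 (radical_le_Jq S' h)
    · have hxI : φ x ∈ I := (Submodule.Quotient.mk_eq_zero I).1 hfx
      refine ⟨x - proj (n + 1) x, sub_proj_mem_Wfil hx, ?_⟩
      have h : (Jq S').mkQ (proj (n + 1) x) = 0 :=
        (Submodule.Quotient.mk_eq_zero _).2 (radical_le_Jq S' (hy.proj_mem_radical hI S' hx hxI))
      rw [map_sub, h, sub_zero]
  have hφn : (Wfil θ' n).map φ.toLinearMap ≤ Wfil θ (D * n) := by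
    rw [Submodule.map_le_iff_le_comap]
    refine Submodule.span_le.2 ?_
    rintro _ ⟨w, hw, rfl⟩
    refine Wfil_mono (Nat.mul_le_mul_left D hw) ?_
    rw [AlgHom.toLinearMap_apply]
    clear hw
    induction w with
    | nil => rw [wordElem_nil, map_one, ← wordElem_nil]; exact wordElem_mem_Wfil (by simp)
    | cons a w ih =>
      rw [wordElem_cons, map_mul, hφ, lift_gen, List.length_cons, mul_add, mul_one, add_comm]
      exact mul_mem_Wfil (hD a) ih
  calc _ ≤ _ := hle
    _ ≤ Module.finrank ℂ ((Wfil θ (D * n)).map I.mkQ) := by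
      rw [Submodule.map_comp]
      exact Submodule.finrank_mono (Submodule.map_mono hφn)
    _ ≤ C * (D * n + 1) ^ e := hC _
    _ ≤ C * ((D + 1) * (n + 1)) ^ e := by gcongr; nlinarith
    _ = C * (D + 1) ^ e * (n + 1) ^ e := by rw [mul_pow, mul_assoc]

end IsPrimitiveFamily

end Transfer

end PreNicholsPaper

namespace PreNicholsPaper

section Multidegree

variable {θ : ℕ}

theorem wordElem_mem_homogD (w : List (Fin θ)) : wordElem θ w ∈ homogD θ (degW θ w) :=
  Submodule.subset_span ⟨w, rfl, rfl⟩

theorem gen_mem_homogD (i : Fin θ) : gen θ i ∈ homogD θ (δ θ i) := by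
  simpa using wordElem_mem_homogD [i]

theorem mul_mem_homogD {a b : Fin θ → ℕ} {x y : TV θ} (hx : x ∈ homogD θ a)
    (hy : y ∈ homogD θ b) : x * y ∈ homogD θ (a + b) := by
  have h : homogD θ a * homogD θ b ≤ homogD θ (a + b) := by
    rw [homogD, homogD, Submodule.span_mul_span]
    refine Submodule.span_le.2 ?_
    rintro _ ⟨_, ⟨v, rfl, rfl⟩, _, ⟨w, rfl, rfl⟩, rfl⟩
    refine Submodule.subset_span ⟨v ++ w, ?_, (wordElem_append v w).symm⟩
    ext i
    simp [degW]
  exact h (Submodule.mul_mem_mul hx hy)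

theorem brk_mem_homogD (q : Fin θ → Fin θ → ℂˣ) (c d : Fin θ → ℕ) {a b : Fin θ → ℕ}
    {x y : TV θ} (hx : x ∈ homogD θ a) (hy : y ∈ homogD θ b) :
    brk q c d x y ∈ homogD θ (a + b) :=
  Submodule.sub_mem _ (mul_mem_homogD hx hy)
    (Submodule.smul_mem _ _ (add_comm b a ▸ mul_mem_homogD hy hx))

theorem xw_mem_homogD (q : Fin θ → Fin θ → ℂˣ) (w : List (Fin θ)) :
    xw q w ∈ homogD θ (degW θ w) := by
  induction w with
  | nil => exact wordElem_mem_homogD []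
  | cons i w ih =>
    rw [degW_cons]
    cases w with
    | nil => simpa [xw] using gen_mem_homogD i
    | cons j w => exact brk_mem_homogD q _ _ (gen_mem_homogD i) ih

theorem sum_degW (w : List (Fin θ)) : ∑ i, degW θ w i = w.length := by
  induction w with
  | nil => simp
  | cons i w ih =>
    simp only [degW_cons, Pi.add_apply, Finset.sum_add_distrib, ih, List.length_cons]
    simp [δ, add_comm]

theorem homogD_le_homogTot (d : Fin θ → ℕ) : homogD θ d ≤ homogTot θ (∑ i, d i) := by
  refine Submodule.span_le.2 ?_
  rintro _ ⟨w, rfl, rfl⟩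
  exact Submodule.subset_span ⟨w, (sum_degW w).symm, rfl⟩

end Multidegree

section PrimitiveElement

variable {θ : ℕ} {q : Fin θ → Fin θ → ℂˣ} {S : BraidedStr θ q} {I : Submodule ℂ (TV θ)}

theorem qf_ne_zero (q : Fin θ → Fin θ → ℂˣ) (a b : Fin θ → ℕ) : qf q a b ≠ 0 :=
  Finset.prod_ne_zero_iff.2 fun i _ => Finset.prod_ne_zero_iff.2 fun j _ =>
    pow_ne_zero _ (q i j).ne_zero

/-- The braiding matrix of a family of homogeneous elements of multidegrees `d_a`. -/
def braidingOf (q : Fin θ → Fin θ → ℂˣ) {m : ℕ} (d : Fin m → Fin θ → ℕ) :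
    Fin m → Fin m → ℂˣ :=
  fun a b => Units.mk0 (qf q (d a) (d b)) (qf_ne_zero q _ _)

theorem exists_dual (hI : IsPreNicholsIdeal S I) {n : ℕ} {y : TV θ} (hy : y ∈ homogTot θ n)
    (hyI : y ∉ I) : ∃ ξ : TV θ →ₗ[ℂ] ℂ, (∀ x ∈ I, ξ x = 0) ∧ ξ y = 1 ∧
      ∀ m, m ≠ n → ∀ x ∈ homogTot θ m, ξ x = 0 := by
  obtain ⟨f, hf, hfI⟩ := Submodule.exists_le_ker_of_notMem hyI
  refine ⟨(f y)⁻¹ • (f ∘ₗ proj n), fun x hx => ?_, ?_, fun m hm x hx => ?_⟩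
  · have : f (proj n x) = 0 := hfI (hI.proj_mem n hx)
    simp [this]
  · simp [proj_of_mem hy, hf]
  · simp [proj_of_mem hx, hm]

/-- Suppose that `T(V)/I` has finite Gelfand–Kirillov dimension. A nonzero homogeneous primitive
element of degree at least two, together with some of the generators, spans a braided vector
space of diagonal type with finite root system. -/
theorem finiteRootSystem_cons (hAAH : AAH) (hI : IsPreNicholsIdeal S I) (hGK : FinGK I)
    {e : Fin θ → ℕ} (he : 2 ≤ ∑ i, e i) {y : TV θ} (hy : y ∈ homogD θ e) (hyI : y ∉ I)
    (hprim : S.Δ y - (y ⊗ₜ 1 + 1 ⊗ₜ y) ∈ mixedSub I) {m : ℕ} {s : Fin m → Fin θ}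
    (hs : Function.Injective s) :
    FiniteRootSystem (braidingOf q (Fin.cons e (δ θ ∘ s) : Fin (m + 1) → Fin θ → ℕ)) := by
  have hyn := homogD_le_homogTot e hy
  have hone : (1 : TV θ) ∈ homogTot θ 0 := Submodule.subset_span ⟨[], rfl, rfl⟩
  have hgen : ∀ i, gen θ i ∈ homogTot θ 1 := fun i =>
    Submodule.subset_span ⟨[i], rfl, (wordElem_singleton i).symm⟩
  obtain ⟨ξ, hξI, hξy, hξ⟩ := exists_dual hI hyn hyI
  have hfam : IsPrimitiveFamily S I
      (braidingOf q (Fin.cons e (δ θ ∘ s) : Fin (m + 1) → Fin θ → ℕ))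
      (Fin.cons e (δ θ ∘ s)) (Fin.cons y (gen θ ∘ s)) (Fin.cons ξ fun a => coef [s a]) :=
    { braiding := fun _ _ => rfl
      homog := Fin.cases hy fun a => gen_mem_homogD (s a)
      primitive := Fin.cases hprim fun a => by simp [S.Δ_gen]
      dual_ideal := Fin.cases hξI fun a => hI.coef_eq_zero (by simp)
      dual_one := Fin.cases (hξ 0 (by omega) 1 hone) fun a => coef_homogTot hone (by simp)
      dual := by
        refine Fin.cases (Fin.cases ?_ fun b => ?_) fun a => Fin.cases ?_ fun b => ?_
        · simpa using hξy
        · simpa using hξ 1 (by omega) _ (hgen (s b))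
        · have : coef [s a] y = 0 := coef_homogTot hyn (by simp; omega)
          simpa [(Fin.succ_ne_zero a).symm] using this
        · have := coef_word [s a] [s b]
          simpa [hs.eq_iff] using this }
  refine hAAH _ _ _ (hfam.finGK hI hGK (braidedStr _) (D := ∑ i, e i) ?_)
  exact Fin.cases (homogTot_le_Wfil le_rfl hyn) fun a => homogTot_le_Wfil (by omega) (hgen (s a))

end PrimitiveElement

section Reflections

variable {θ : ℕ} {q : Fin θ → Fin θ → ℂˣ} {a b c : Fin θ}

theorem cij_eq_zero (hab : a ≠ b) (h : qtil q a b = 1) : cij q a b = 0 := by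
  have : (0 : ℕ) ∈ cSet q a b := by simp [cSet, h]
  simp [cij, hab, Nat.sInf_eq_zero.2 (Or.inl this)]

theorem cij_eq_neg_one (hab : a ≠ b) (ha : (q a a : ℂ) = -1) (h : qtil q a b ≠ 1) :
    cij q a b = -1 := by
  have h0 : (0 : ℕ) ∉ cSet q a b := by simp [cSet, qnum, sub_eq_zero, h.symm]
  have h1 : (1 : ℕ) ∈ cSet q a b := by simp [cSet, qnum, ha, Finset.sum_range_succ]
  have : sInf (cSet q a b) = 1 := by
    refine le_antisymm (Nat.sInf_le h1) (Nat.one_le_iff_ne_zero.2 fun h => ?_)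
    rcases Nat.sInf_eq_zero.1 h with h | h
    · exact h0 h
    · simp [h] at h1
  simp [cij, hab, this]

theorem not_reflectable (hab : a ≠ b) (ha : (q a a : ℂ) = 1) (h : qtil q a b ≠ 1) :
    ¬ reflectable q a := fun hr => by
  obtain ⟨n, hn⟩ := hr b hab.symm
  have hn' : ((n : ℂ) + 1) * (1 - qtil q a b) = 0 := by simpa [cSet, qnum, ha] using hn
  rcases mul_eq_zero.1 hn' with hn' | hn'
  · exact Nat.cast_add_one_ne_zero n hn'
  · exact h (sub_eq_zero.1 hn').symm

theorem reflectMat_self (hab : a ≠ b) (ha : (q a a : ℂ) = -1) (h : qtil q a b ≠ 1) :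
    (reflectMat q a b b : ℂ) = -(q b b * qtil q a b) := by
  simp [reflectMat, cij_eq_neg_one hab ha h, ha, qtil]
  ring

theorem reflectMat_self_of_eq_one (hab : a ≠ b) (h : qtil q a b = 1) :
    reflectMat q a b b = q b b := by
  simp [reflectMat, cij_eq_zero hab h]

theorem qtil_reflectMat_left (hab : a ≠ b) (ha : (q a a : ℂ) = -1) (h : qtil q a b ≠ 1) :
    qtil (reflectMat q a) a b = (qtil q a b)⁻¹ := by
  have h1 := (q a b).ne_zero
  have h2 := (q b a).ne_zero
  simp [reflectMat, cij_eq_neg_one hab ha h, ha, qtil, show cij q a a = 2 by simp [cij]]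
  field_simp

theorem qtil_reflectMat_left_of_eq_one (hab : a ≠ b) (h : qtil q a b = 1) :
    qtil (reflectMat q a) a b = 1 := by
  have h1 := (q a b).ne_zero
  have h2 := (q b a).ne_zero
  simp only [qtil] at h
  simp [reflectMat, cij_eq_zero hab h, qtil, show cij q a a = 2 by simp [cij]]
  field_simp
  grind

theorem qtil_reflectMat (hab : a ≠ b) (hac : a ≠ c) (ha : (q a a : ℂ) = -1)
    (hb : qtil q a b ≠ 1) (hc : qtil q a c = 1) :
    qtil (reflectMat q a) b c = qtil q b c := by
  have : (q a c : ℂ) * q c a = 1 := hc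
  simp [reflectMat, cij_eq_neg_one hab ha hb, cij_eq_zero hac hc, qtil]
  linear_combination (q b c * q c b : ℂ) * this

end Reflections

section Quartic

variable {θ : ℕ} {q : Fin θ → Fin θ → ℂˣ} {S : BraidedStr θ q} {I : Submodule ℂ (TV θ)}

theorem mkQ_swap_left (hI : IsPreNicholsIdeal S I) {z w : TV θ} {c : ℂ} (h : z - c • w ∈ I)
    (u v b : TV θ) :
    (mixedSub I).mkQ ((u * (z * v)) ⊗ₜ b) = c • (mixedSub I).mkQ ((u * (w * v)) ⊗ₜ b) := by
  rw [← map_smul, ← sub_eq_zero, ← map_sub]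
  refine (Submodule.Quotient.mk_eq_zero _).2 ?_
  have := tmul_mem_mixedSub_left (hI.mul_left u _ (hI.mul_right v _ h)) b
  rwa [sub_mul, mul_sub, smul_mul_assoc, mul_smul_comm, TensorProduct.sub_tmul,
    ← TensorProduct.smul_tmul'] at this

theorem mkQ_swap_right (hI : IsPreNicholsIdeal S I) {z w : TV θ} {c : ℂ} (h : z - c • w ∈ I)
    (u v a : TV θ) :
    (mixedSub I).mkQ (a ⊗ₜ (u * (z * v))) = c • (mixedSub I).mkQ (a ⊗ₜ (u * (w * v))) := by
  rw [← map_smul, ← sub_eq_zero, ← map_sub]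
  refine (Submodule.Quotient.mk_eq_zero _).2 ?_
  have := tmul_mem_mixedSub_right a (hI.mul_left u _ (hI.mul_right v _ h))
  rwa [sub_mul, mul_sub, smul_mul_assoc, mul_smul_comm, TensorProduct.tmul_sub,
    TensorProduct.tmul_smul] at this

/-- The element of degree `α_i + 2 α_j + α_k` expressing the relation between `[x_i, x_{jjk}]_c`,
`[x_{ijk}, x_j]_c` and `x_j x_{ijk}`. -/
def quarticElem (q : Fin θ → Fin θ → ℂˣ) (i j k : Fin θ) : TV θ :=
  brk q (δ θ i) (δ θ j + δ θ j + δ θ k) (gen θ i) (xw q [j, j, k]) -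
    ((1 + (q j j : ℂ) ^ 2) * ((q k j : ℂ))⁻¹) •
      brk q (δ θ i + δ θ j + δ θ k) (δ θ j) (xw q [i, j, k]) (gen θ j) -
    ((1 + (q j j : ℂ) ^ 2) * (1 + (q j j : ℂ)) * (q i j : ℂ)) •
      (gen θ j * xw q [i, j, k])

theorem quarticElem_mem_homogD (q : Fin θ → Fin θ → ℂˣ) (i j k : Fin θ) :
    quarticElem q i j k ∈ homogD θ (δ θ i + (δ θ j + δ θ j) + δ θ k) := by
  have hijk := xw_mem_homogD q [i, j, k]
  have hjjk := xw_mem_homogD q [j, j, k]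
  refine Submodule.sub_mem _ (Submodule.sub_mem _ ?_ (Submodule.smul_mem _ _ ?_))
    (Submodule.smul_mem _ _ ?_)
  · convert brk_mem_homogD q _ _ (gen_mem_homogD i) hjjk using 2
    simp only [degW_cons, degW_nil]; abel
  · convert brk_mem_homogD q _ _ hijk (gen_mem_homogD j) using 2
    simp only [degW_cons, degW_nil]; abel
  · convert mul_mem_homogD (gen_mem_homogD j) hijk using 2
    simp only [degW_cons, degW_nil]; abel

/-- If `x_k x_i = q_{ki} x_i x_k` in `T(V)/I`, then the quartic element is primitive there. -/
theorem quarticElem_primitive (hI : IsPreNicholsIdeal S I) {i j k : Fin θ}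
    (hik : qtil q i k = 1) (hij : qtil q i j ^ 2 + qtil q i j + 1 = 0)
    (hjk : (q j j : ℂ) = -(qtil q j k))
    (hjj : (q j j : ℂ) = qtil q i j ∨ (q j j : ℂ) = -(qtil q i j))
    (hki : gen θ k * gen θ i - (q k i : ℂ) • (gen θ i * gen θ k) ∈ I) :
    S.Δ (quarticElem q i j k) - (quarticElem q i j k ⊗ₜ 1 + 1 ⊗ₜ quarticElem q i j k) ∈
      mixedSub I := by
  refine (Submodule.Quotient.mk_eq_zero _).1 (?_ : (mixedSub I).mkQ _ = 0)
  have L := mkQ_swap_left hI hki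
  have R := mkQ_swap_right hI hki
  have L1 := fun b => L 1 1 b
  have L2 := fun v b => L 1 v b
  have L3 := fun u b => L u 1 b
  have L5 := fun u u' b => L (u * u') 1 b
  have R1 := fun b => R 1 1 b
  have R2 := fun v b => R 1 v b
  have R3 := fun u b => R u 1 b
  have R5 := fun u u' b => R (u * u') 1 b
  simp only [one_mul, mul_one, mul_assoc] at L L1 L2 L3 L5 R R1 R2 R3 R5
  simp only [quarticElem, brk, xw, ad1, degW_cons, degW_nil, qf_add_left, qf_add_right, qf_δ, add_zero,
    mul_sub, sub_mul, smul_sub, mul_smul_comm, smul_mul_assoc, smul_smul, mul_assoc]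
  simp only [map_sub, map_smul, Δ_gen_mul, S.Δ_gen, map_add, opE_tmul, map_mul, map_one, twL_gen,
    qf_δ, smul_mul_assoc, mul_smul_comm, ← TensorProduct.smul_tmul', mul_one,
    TensorProduct.sub_tmul, TensorProduct.tmul_sub, TensorProduct.tmul_smul]
  simp only [L, L1, L2, L3, L5, R, R1, R2, R3, R5]
  have hkj : (q k j : ℂ) * (q k j : ℂ)⁻¹ = 1 := mul_inv_cancel₀ (q k j).ne_zero
  simp only [qtil] at hik hij hjk hjj
  match_scalars
  all_goals
    clear L L1 L2 L3 L5 R R1 R2 R3 R5 hI hki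
    generalize (q i j : ℂ) = a, (q j i : ℂ) = a', (q j k : ℂ) = b, (q k j : ℂ)⁻¹ = g,
      (q k j : ℂ) = b', (q i k : ℂ) = c, (q k i : ℂ) = c', (q j j : ℂ) = p at *
  all_goals rcases hjj with hjj | hjj <;> grind
end Quartic
end PreNicholsPaper

namespace PreNicholsPaper

section Membership

variable {θ : ℕ} {q : Fin θ → Fin θ → ℂˣ} {S : BraidedStr θ q} {I : Submodule ℂ (TV θ)}
  {i j k : Fin θ}

theorem qtil_comm (q : Fin θ → Fin θ → ℂˣ) (a b : Fin θ) : qtil q a b = qtil q b a :=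
  mul_comm _ _

theorem sum_δ (i : Fin θ) : ∑ a, δ θ i a = 1 := by simp [δ]

theorem commutator_primitive (S : BraidedStr θ q) (hik : qtil q i k = 1) :
    S.Δ (gen θ k * gen θ i - (q k i : ℂ) • (gen θ i * gen θ k)) =
      (gen θ k * gen θ i - (q k i : ℂ) • (gen θ i * gen θ k)) ⊗ₜ 1 +
        1 ⊗ₜ (gen θ k * gen θ i - (q k i : ℂ) • (gen θ i * gen θ k)) := by
  simp only [qtil] at hik
  simp only [map_sub, map_smul, Δ_gen_mul, S.Δ_gen, map_add, opE_tmul, map_one, twL_gen,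
    qf_δ, ← TensorProduct.smul_tmul', mul_one,
    TensorProduct.sub_tmul, TensorProduct.tmul_sub, TensorProduct.tmul_smul]
  match_scalars <;> grind

theorem commutator_mem (hAAH : AAH) (hI : IsPreNicholsIdeal S I) (hGK : FinGK I)
    (hi : (q i i : ℂ) = -1) (hk : (q k k : ℂ) = -1) (hik : qtil q i k = 1)
    (h : qtil q i j * qtil q j k ≠ 1) :
    gen θ k * gen θ i - (q k i : ℂ) • (gen θ i * gen θ k) ∈ I := by
  by_contra hx
  have hdeg : gen θ k * gen θ i - (q k i : ℂ) • (gen θ i * gen θ k) ∈ homogD θ (δ θ k + δ θ i) := by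
    rw [← qf_δ]
    exact brk_mem_homogD q _ _ (gen_mem_homogD k) (gen_mem_homogD i)
  have hF := finiteRootSystem_cons hAAH hI hGK (by simp [Finset.sum_add_distrib, sum_δ]) hdeg hx
    (by simp [commutator_primitive S hik]) (s := ![j]) (Function.injective_of_subsingleton _)
  refine not_reflectable (b := 1) (by simp) ?_ ?_ (hF.1 _ 0 ⟨_, .simple 0⟩)
  · simp only [qtil] at hik
    simp [braidingOf, qf_add_left, qf_add_right, qf_δ, hi, hk]
    linear_combination hik
  · simp only [qtil] at h ⊢
    simp [braidingOf, qf_add_left, qf_add_right, qf_δ]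
    grind

theorem not_finiteRootSystem {Q : Fin 3 → Fin 3 → ℂˣ} {ζ : ℂ} (hζ : ζ ^ 2 + ζ + 1 = 0)
    (h00 : (Q 0 0 : ℂ) = ζ ^ 2) (h11 : (Q 1 1 : ℂ) = -1) (h22 : (Q 2 2 : ℂ) = -1)
    (h10 : qtil Q 1 0 = ζ ^ 2) (h20 : qtil Q 2 0 = ζ ^ 2) (h12 : qtil Q 1 2 = 1) :
    ¬ FiniteRootSystem Q := fun hF => by
  have hne : ζ ^ 2 ≠ 1 := by grind
  have e10 : (1 : Fin 3) ≠ 0 := by decide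
  have e12 : (1 : Fin 3) ≠ 2 := by decide
  have e20 : (2 : Fin 3) ≠ 0 := by decide
  set R := reflectMat Q 1 with hR
  have r00 : (R 0 0 : ℂ) = -ζ := by
    rw [hR, reflectMat_self e10 h11 (h10 ▸ hne), h00, h10]
    grind
  have r22 : (R 2 2 : ℂ) = -1 := by rw [hR, reflectMat_self_of_eq_one e12 h12, h22]
  have r10 : qtil R 1 0 = (ζ ^ 2)⁻¹ := by
    rw [hR, qtil_reflectMat_left e10 h11 (h10 ▸ hne), h10]
  have r20 : qtil R 2 0 = ζ ^ 2 := by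
    rw [qtil_comm, hR, qtil_reflectMat e10 e12 h11 (h10 ▸ hne) h12, qtil_comm, h20]
  have r21 : qtil R 2 1 = 1 := by
    rw [qtil_comm, hR, qtil_reflectMat_left_of_eq_one e12 h12]
  refine not_reflectable e10.symm ?_ ?_
    (hF.1 (reflectMat R 2) 0 ⟨_, .reflect 2 (.reflect 1 (.simple 0))⟩)
  · rw [reflectMat_self e20 r22 (r20 ▸ hne), r00, r20]
    grind
  · rw [qtil_reflectMat e20 e12.symm r22 (r20 ▸ hne) r21, qtil_comm, r10]
    simpa using hne

theorem quarticElem_mem (hAAH : AAH) (hI : IsPreNicholsIdeal S I) (hGK : FinGK I) (hne : i ≠ k)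
    (hi : (q i i : ℂ) = -1) (hk : (q k k : ℂ) = -1) (hik : qtil q i k = 1)
    (hij : IsPrimitiveRoot (qtil q i j) 3) (hjk : (q j j : ℂ) = -(qtil q j k))
    (hjj : (q j j : ℂ) = qtil q i j ∨ (q j j : ℂ) = -(qtil q i j)) :
    quarticElem q i j k ∈ I := by
  have hζ : qtil q i j ^ 2 + qtil q i j + 1 = 0 := by
    have h1 := hij.pow_eq_one
    have h2 := hij.ne_one (by norm_num)
    grind
  by_contra hy
  have hki := commutator_mem hAAH hI hGK hi hk hik (j := j) (by grind)
  have hinj : Function.Injective ![i, k] := by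
    intro a b
    fin_cases a <;> fin_cases b <;> simp [hne, hne.symm]
  have hcons (e : Fin θ → ℕ) (f : Fin 2 → Fin θ → ℕ) :
      (Fin.cons e f : Fin 3 → Fin θ → ℕ) 2 = f 1 := rfl
  refine not_finiteRootSystem hζ ?_ ?_ ?_ ?_ ?_ ?_
    (finiteRootSystem_cons hAAH hI hGK (by simp [Finset.sum_add_distrib, sum_δ])
      (quarticElem_mem_homogD q i j k) hy (quarticElem_primitive hI hik hζ hjk hjj hki) hinj)
  all_goals
    simp only [qtil] at hik hζ hjk hjj ⊢
    simp [braidingOf, qf_add_left, qf_add_right, qf_δ, hi, hk, hcons]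
  · rcases hjj with h | h <;> grind
  · linear_combination (q i j * q j i : ℂ) ^ 2 * hik
  · rcases hjj with h | h <;> grind
  · exact hik

end Membership

end PreNicholsPaper

namespace PreNicholsPaper

/-- Lemma 3.5: if `q_{ii} = q_{kk} = -1`, `q̃_{ik} = 1`,
`q̃_{ij} ∈ G₃'` and `q_{jj} = -q̃_{jk} = ±q̃_{ij}`, then
`[x_i,x_{jjk}]_c = (1+q_{jj}²)q_{kj}⁻¹[x_{ijk},x_j]_c + (1+q_{jj}²)(1+q_{jj})q_{ij} x_j x_{ijk}`
in every finite-GKdim pre-Nichols algebra of `q`. -/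
theorem statement_9 (θ : ℕ) (q : Fin θ → Fin θ → ℂˣ) (S : BraidedStr θ q)
    (hconn : (dynkin q).Connected)
    (hfd : FiniteDimensional ℂ (TV θ ⧸ Jq S))
    (hAAH : AAH)
    (I : Submodule ℂ (TV θ)) (hI : IsPreNicholsIdeal S I) (hGK : FinGK I)
    (i j k : Fin θ) (hij : i ≠ j) (hik : i ≠ k) (hjk : j ≠ k)
    (h1 : (q i i : ℂ) = -1) (h2 : (q k k : ℂ) = -1) (h3 : qtil q i k = 1)
    (h4 : IsPrimitiveRoot (qtil q i j) 3)
    (h5 : (q j j : ℂ) = -(qtil q j k))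
    (h6 : (q j j : ℂ) = qtil q i j ∨ (q j j : ℂ) = -(qtil q i j)) :
    brk q (δ θ i) (δ θ j + δ θ j + δ θ k) (gen θ i) (xw q [j, j, k]) -
      ((1 + (q j j : ℂ) ^ 2) * ((q k j : ℂ))⁻¹) •
        brk q (δ θ i + δ θ j + δ θ k) (δ θ j) (xw q [i, j, k]) (gen θ j) -
      ((1 + (q j j : ℂ) ^ 2) * (1 + (q j j : ℂ)) * (q i j : ℂ)) •
        (gen θ j * xw q [i, j, k]) ∈ I := by
  exact quarticElem_mem hAAH hI hGK hik h1 h2 h3 h4 h5 h6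

end PreNicholsPaper
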